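/- arXiv:2407.11903 — 2 statements merged into one kernel-verified Lean document; each statement's English description precedes it below -/
import Mathlib

section
/- (Pogorelov's interior C² estimate) For every n ≥ 2, κ ∈ (0,1), and δ > 0 there exists a constant C = C(n, κ, δ) > 0 with the following property: if w : ℝⁿ → ℝ is a smooth convex function such that det D²w(x) = 1 for all x in the open set Ω = {w < 0}, and the inclusions B_κ(0) ⊆ Ω ⊆ B_{1/κ}(0) hold, then ‖D²w(x)‖ ≤ C for every x with w(x) < −δ. -/
open Real

/-- Second partial derivative matrix (Hessian) of `w` at `x`. -/
noncomputable def hessianMatrix {n : ℕ} (w : EuclideanSpace ℝ (Fin n) → ℝ)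
    (x : EuclideanSpace ℝ (Fin n)) : Matrix (Fin n) (Fin n) ℝ :=
  Matrix.of fun i j =>
    fderiv ℝ (fun y => fderiv ℝ w y (EuclideanSpace.single j 1)) x (EuclideanSpace.single i 1)

/-!
If `{w < 0}` lies in a slab, comparing `w` with a quadratic barrier bounds `-w x` by a multiple of
the distance from `x` to a face of the slab, up to an arbitrarily small error. By convexity
`{w < 0}` lies in the half-space `⟪∇w x, y - x⟫ ≤ -w x`, whose boundary is at distance
`-w x / ‖∇w x‖` from `x`. So the gradient is bounded on `{w ≤ -δ/2}`.

Pogorelov's function `(-w - δ/2) w_ee exp (w_e ^ 2 / 2)` then attains its maximum over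
`{w ≤ -δ/2}` at an interior point `z`. In a frame where `D²w(z)` is the identity, the linearised
operator is the Laplacian, and differentiating `det D²w = 1` once and twice in the direction `e`
turns the first and second order conditions at `z` into a quadratic inequality for
`(-w - δ/2) w_ee` whose coefficients depend only on the dimension and the gradient bound. The
equation is differentiated through `n + log det A ≤ tr A`, with equality at `A = 1`, rather than
by expanding the determinant.
-/

open Set Filter Matrix
open scoped Topology RealInnerProductSpace

/-- The derivative of `f` in the direction `v`, as a function of the base point, so that higher
directional derivatives are iterates. -/
noncomputable def dirDeriv {E : Type*} [NormedAddCommGroup E] [NormedSpace ℝ E]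
    (v : E) (f : E → ℝ) (x : E) : ℝ := fderiv ℝ f x v

local notation:max "∂[" v "]" f:max => dirDeriv v f

section DirectionalDerivative

variable {E : Type*} [NormedAddCommGroup E] [NormedSpace ℝ E] {f : E → ℝ} {k : WithTop ℕ∞}

theorem contDiff_dirDeriv {m : WithTop ℕ∞} (hf : ContDiff ℝ k f) (v : E)
    (hmk : m + 1 ≤ k := by norm_num) : ContDiff ℝ m ∂[v] f :=
  (hf.fderiv_right hmk).clm_apply contDiff_const

theorem dirDeriv_dirDeriv_eq_fderiv_fderiv (hf : ContDiff ℝ k f) (u v x : E)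
    (hk : 2 ≤ k := by norm_num) : ∂[u] ∂[v] f x = fderiv ℝ (fderiv ℝ f) x u v := by
  have hdiff : DifferentiableAt ℝ (fderiv ℝ f) x :=
    ((hf.of_le hk).fderiv_right (m := 1) (by norm_num)).differentiable (by norm_num) x
  change fderiv ℝ (fun y => fderiv ℝ f y v) x u = _
  simp [fderiv_clm_apply hdiff (differentiableAt_const v)]

theorem dirDeriv_comm (hf : ContDiff ℝ k f) (u v : E) (hk : 2 ≤ k := by norm_num) :
    ∂[u] ∂[v] f = ∂[v] ∂[u] f := by
  ext x
  rw [dirDeriv_dirDeriv_eq_fderiv_fderiv hf u v x hk,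
    dirDeriv_dirDeriv_eq_fderiv_fderiv hf v u x hk]
  exact hf.contDiffAt.isSymmSndFDerivAt (by simpa using hk) u v

theorem tendsto_add_smul (x v : E) : Tendsto (fun t : ℝ => x + t • v) (𝓝 0) (𝓝 x) := by
  simpa using (show Continuous fun t : ℝ => x + t • v by fun_prop).tendsto 0

theorem hasDerivAt_comp_add_smul (hf : Differentiable ℝ f) (x v : E) (t : ℝ) :
    HasDerivAt (fun s : ℝ => f (x + s • v)) (∂[v] f (x + t • v)) t := by
  have hline : HasDerivAt (fun s : ℝ => x + s • v) v t := by
    simpa using ((hasDerivAt_id t).smul_const v).const_add x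
  exact (hf (x + t • v)).hasFDerivAt.comp_hasDerivAt t hline

theorem dirDeriv_sum_smul {ι : Type*} (s : Finset ι) (c : ι → ℝ) (v : ι → E) (f : E → ℝ) (x : E) :
    ∂[∑ i ∈ s, c i • v i] f x = ∑ i ∈ s, c i * ∂[v i] f x := by
  simp [dirDeriv]

end DirectionalDerivative

section SecondDerivativeTest

theorem deriv_eq_zero_and_nonneg_of_isLocalMin {g g' : ℝ → ℝ} {g'' a : ℝ}
    (hg : ∀ᶠ t in 𝓝 a, HasDerivAt g (g' t) t) (hg' : HasDerivAt g' g'' a)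
    (hmin : IsLocalMin g a) : g' a = 0 ∧ 0 ≤ g'' := by
  have hcrit : g' a = 0 := hmin.hasDerivAt_eq_zero hg.self_of_nhds
  refine ⟨hcrit, le_of_not_gt fun hneg => hneg.ne ?_⟩
  have hderiv : deriv g =ᶠ[𝓝 a] g' := hg.mono fun t ht => ht.deriv
  have hderiv₂ : deriv (deriv g) a = g'' := by rw [hderiv.deriv_eq, hg'.deriv]
  have hmax : IsLocalMax g a := isLocalMax_of_deriv_deriv_neg (by rwa [hderiv₂])
    (by rw [hderiv.self_of_nhds, hcrit]) hg.self_of_nhds.continuousAt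
  have hconst : g =ᶠ[𝓝 a] fun _ => g a := by
    filter_upwards [hmin, hmax] with t hle hge using le_antisymm hge hle
  rw [← hderiv₂, hconst.deriv.deriv_eq]
  simp

variable {E : Type*} [NormedAddCommGroup E] [NormedSpace ℝ E]

theorem dirDeriv_dirDeriv_nonneg_of_isLocalMin {f : E → ℝ} {x : E} (hf : ContDiff ℝ 2 f)
    (hmin : IsLocalMin f x) (v : E) : 0 ≤ ∂[v] ∂[v] f x := by
  have hf' : ContDiff ℝ 1 ∂[v] f := contDiff_dirDeriv hf v
  have hline : IsLocalMin (fun t : ℝ => f (x + t • v)) 0 := by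
    simpa [IsLocalMin, IsMinFilter] using (tendsto_add_smul x v).eventually hmin
  simpa using (deriv_eq_zero_and_nonneg_of_isLocalMin
    (.of_forall (hasDerivAt_comp_add_smul (hf.differentiable (by norm_num)) x v))
    (hasDerivAt_comp_add_smul (hf'.differentiable (by norm_num)) x v 0)
    hline).2

theorem dirDeriv_dirDeriv_sub {f g : E → ℝ} (hf : ContDiff ℝ 2 f) (hg : ContDiff ℝ 2 g)
    (u v x : E) : ∂[u] ∂[v] (f - g) x = ∂[u] ∂[v] f x - ∂[u] ∂[v] g x := by
  have hsub : ∂[v] (f - g) = ∂[v] f - ∂[v] g := by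
    ext y
    simp [dirDeriv, fderiv_sub (hf.differentiable (by norm_num) y)
      (hg.differentiable (by norm_num) y)]
  have hf' : ContDiff ℝ 1 ∂[v] f := contDiff_dirDeriv hf v
  have hg' : ContDiff ℝ 1 ∂[v] g := contDiff_dirDeriv hg v
  rw [hsub]
  simp [dirDeriv, fderiv_sub (hf'.differentiable (by norm_num) x)
    (hg'.differentiable (by norm_num) x)]

end SecondDerivativeTest

section Convex

variable {E : Type*} [NormedAddCommGroup E] [NormedSpace ℝ E] {w : E → ℝ}

theorem convexOn_comp_add_smul (hc : ConvexOn ℝ univ w) (x v : E) :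
    ConvexOn ℝ univ fun t : ℝ => w (x + t • v) := by
  simpa [Function.comp_def, AffineMap.lineMap_apply, add_comm] using
    hc.comp_affineMap (AffineMap.lineMap x (x + v))

theorem add_dirDeriv_le_of_convexOn (hw : Differentiable ℝ w) (hc : ConvexOn ℝ univ w) (x v : E) :
    w x + ∂[v] w x ≤ w (x + v) := by
  have hslope := (convexOn_comp_add_smul hc x v).le_slope_of_hasDerivAt (mem_univ 0) (mem_univ 1)
    one_pos (hasDerivAt_comp_add_smul hw x v 0)
  simp only [slope_def_field, one_smul, zero_smul, add_zero, sub_zero, div_one] at hslope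
  linarith

theorem dirDeriv_dirDeriv_nonneg_of_convexOn (hw : ContDiff ℝ 2 w) (hc : ConvexOn ℝ univ w)
    (x v : E) : 0 ≤ ∂[v] ∂[v] w x := by
  have hd := hasDerivAt_comp_add_smul (hw.differentiable (by norm_num)) x v
  have hw' : ContDiff ℝ 1 ∂[v] w := contDiff_dirDeriv hw v
  have hmono : Monotone fun t : ℝ => ∂[v] w (x + t • v) := by
    have := (convexOn_comp_add_smul hc x v).monotoneOn_deriv fun t _ => (hd t).differentiableAt
    rwa [monotoneOn_univ, funext fun t => (hd t).deriv] at this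
  simpa [(hasDerivAt_comp_add_smul (hw'.differentiable (by norm_num)) x v 0).deriv] using
    hmono.deriv_nonneg (x := 0)

end Convex

section Hessian

variable {n : ℕ} {w : EuclideanSpace ℝ (Fin n) → ℝ}

theorem dirDeriv_dirDeriv_eq_dotProduct_hessianMatrix (hw : ContDiff ℝ 2 w)
    (u v x : EuclideanSpace ℝ (Fin n)) :
    ∂[u] ∂[v] w x = u ⬝ᵥ hessianMatrix w x *ᵥ v := by
  have hsum (v : EuclideanSpace ℝ (Fin n)) : v = ∑ i, v i • EuclideanSpace.single i (1 : ℝ) := by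
    simpa using ((EuclideanSpace.basisFun (Fin n) ℝ).sum_repr v).symm
  have hentry (i j : Fin n) : hessianMatrix w x i j =
      fderiv ℝ (fderiv ℝ w) x (EuclideanSpace.single i 1) (EuclideanSpace.single j 1) :=
    dirDeriv_dirDeriv_eq_fderiv_fderiv hw _ _ x
  rw [dirDeriv_dirDeriv_eq_fderiv_fderiv hw]
  conv_lhs => rw [hsum u, hsum v]
  simp only [map_sum, map_smul, _root_.sum_apply, _root_.smul_apply, dotProduct, mulVec, hentry,
    smul_eq_mul, Finset.mul_sum]
  rw [Finset.sum_comm]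
  exact Finset.sum_congr rfl fun i _ => Finset.sum_congr rfl fun j _ => by ring

theorem isHermitian_hessianMatrix (hw : ContDiff ℝ 2 w) (x : EuclideanSpace ℝ (Fin n)) :
    (hessianMatrix w x).IsHermitian :=
  Matrix.IsHermitian.ext fun i j => congrFun (dirDeriv_comm hw _ _) x

theorem posSemidef_hessianMatrix_iff (hw : ContDiff ℝ 2 w) (x : EuclideanSpace ℝ (Fin n)) :
    (hessianMatrix w x).PosSemidef ↔ ∀ v, 0 ≤ ∂[v] ∂[v] w x := by
  simp only [posSemidef_iff_dotProduct_mulVec, isHermitian_hessianMatrix hw x, true_and,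
    star_trivial, dirDeriv_dirDeriv_eq_dotProduct_hessianMatrix hw]
  exact (WithLp.equiv 2 (Fin n → ℝ)).symm.forall_congr_left

theorem posSemidef_hessianMatrix_of_convexOn (hw : ContDiff ℝ 2 w) (hc : ConvexOn ℝ univ w)
    (x : EuclideanSpace ℝ (Fin n)) : (hessianMatrix w x).PosSemidef :=
  (posSemidef_hessianMatrix_iff hw x).2 (dirDeriv_dirDeriv_nonneg_of_convexOn hw hc x)

theorem hessianMatrix_sub {f g : EuclideanSpace ℝ (Fin n) → ℝ} (hf : ContDiff ℝ 2 f)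
    (hg : ContDiff ℝ 2 g) (x : EuclideanSpace ℝ (Fin n)) :
    hessianMatrix (f - g) x = hessianMatrix f x - hessianMatrix g x := by
  ext i j
  exact dirDeriv_dirDeriv_sub hf hg _ _ x

theorem posSemidef_hessianMatrix_of_isLocalMin {x : EuclideanSpace ℝ (Fin n)}
    (hw : ContDiff ℝ 2 w) (hmin : IsLocalMin w x) : (hessianMatrix w x).PosSemidef :=
  (posSemidef_hessianMatrix_iff hw x).2 (dirDeriv_dirDeriv_nonneg_of_isLocalMin hw hmin)

theorem norm_toEuclideanCLM_le_of_posSemidef {ι : Type*} [Fintype ι] [DecidableEq ι]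
    {A : Matrix ι ι ℝ} (hA : A.PosSemidef) {C : ℝ} (hC : 0 ≤ C)
    (h : ∀ e : EuclideanSpace ℝ ι, ‖e‖ = 1 → e ⬝ᵥ A *ᵥ e ≤ C) :
    ‖Matrix.toEuclideanCLM (𝕜 := ℝ) A‖ ≤ C := by
  have hsymm : (Matrix.toEuclideanCLM (𝕜 := ℝ) A :
      EuclideanSpace ℝ ι →ₗ[ℝ] EuclideanSpace ℝ ι).IsSymmetric :=
    isSymmetric_toEuclideanLin_iff.2 hA.isHermitian
  rw [ContinuousLinearMap.norm_eq_iSup_rayleighQuotient _ hsymm]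
  refine ciSup_le fun x => ?_
  rcases eq_or_ne x 0 with rfl | hx
  · simpa using hC
  · have hunit := norm_smul_inv_norm (𝕜 := ℝ) hx
    rw [← ContinuousLinearMap.rayleigh_smul _ x (inv_ne_zero (norm_ne_zero_iff.2 hx)),
      ContinuousLinearMap.rayleighQuotient, ContinuousLinearMap.reApplyInnerSelf_apply]
    simp only [RCLike.ofReal_real_eq_id, id_eq, RCLike.re_to_real] at hunit ⊢
    rw [hunit, one_pow, div_one, real_inner_comm, inner_toEuclideanCLM, abs_of_nonneg]
    · exact h _ hunit
    · simpa using hA.dotProduct_mulVec_nonneg (‖x‖⁻¹ • x).ofLp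

end Hessian

section PositiveMatrices

variable {ι : Type*} [Fintype ι] {A B : Matrix ι ι ℝ}

open scoped MatrixOrder in
theorem exists_eq_transpose_mul_self (hA : A.PosSemidef) : ∃ P : Matrix ι ι ℝ, A = Pᵀ * P := by
  classical exact CStarAlgebra.nonneg_iff_eq_star_mul_self.1 hA.nonneg

theorem trace_mul_nonneg (hA : A.PosSemidef) (hB : B.PosSemidef) : 0 ≤ (A * B).trace := by
  obtain ⟨P, rfl⟩ := exists_eq_transpose_mul_self hB
  have hnonneg := (hA.mul_mul_conjTranspose_same P).trace_nonneg
  rwa [conjTranspose_eq_transpose_of_trivial, trace_mul_cycle, trace_mul_comm] at hnonneg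

variable [DecidableEq ι]

theorem card_add_log_det_le_trace (hA : A.PosDef) :
    Fintype.card ι + log A.det ≤ A.trace := by
  have hlog : log A.det = ∑ i, log (hA.isHermitian.eigenvalues i) := by
    rw [hA.isHermitian.det_eq_prod_eigenvalues]
    exact log_prod fun i _ => (hA.eigenvalues_pos i).ne'
  have htrace : A.trace = ∑ i, hA.isHermitian.eigenvalues i :=
    hA.isHermitian.trace_eq_sum_eigenvalues
  calc Fintype.card ι + log A.det
      = ∑ i, (1 + log (hA.isHermitian.eigenvalues i)) := by simp [hlog, Finset.sum_add_distrib]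
    _ ≤ A.trace := htrace ▸ Finset.sum_le_sum fun i _ => by
      linarith [log_le_sub_one_of_pos (hA.eigenvalues_pos i)]

theorem card_add_log_det_add_log_det_le_trace_mul (hA : A.PosDef) (hB : B.PosDef) :
    Fintype.card ι + log A.det + log B.det ≤ (A * B).trace := by
  obtain ⟨P, rfl⟩ := exists_eq_transpose_mul_self hB.posSemidef
  have hdet : (P * A * Pᵀ).det = A.det * (Pᵀ * P).det := by simp only [det_mul]; ring
  have hpos : (P * A * Pᵀ).PosDef :=
    (hA.posSemidef.mul_mul_conjTranspose_same P).posDef_iff_det_ne_zero.2 <| by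
      simpa only [conjTranspose_eq_transpose_of_trivial, hdet] using
        (mul_pos hA.det_pos hB.det_pos).ne'
  have htrace := card_add_log_det_le_trace hpos
  rwa [hdet, log_mul hA.det_pos.ne' hB.det_pos.ne', ← add_assoc, trace_mul_cycle,
    trace_mul_comm] at htrace

theorem det_le_det_of_posSemidef_sub (hB : B.PosDef) (hAB : (A - B).PosSemidef) :
    B.det ≤ A.det := by
  have hA : A.PosDef := by simpa using hB.add_posSemidef hAB
  have hunit : IsUnit A.det := hA.det_pos.ne'.isUnit
  -- `log (det B / det A) ≤ tr (A⁻¹ B) - n = -tr (A⁻¹ (A - B)) ≤ 0`.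
  have hlog := card_add_log_det_add_log_det_le_trace_mul hA.inv hB
  have htrace := trace_mul_nonneg hA.inv.posSemidef hAB
  rw [det_nonsing_inv, Ring.inverse_eq_inv', log_inv] at hlog
  rw [Matrix.mul_sub, nonsing_inv_mul A hunit, trace_sub, trace_one] at htrace
  exact (log_le_log_iff hB.det_pos hA.det_pos).1 (by linarith)

end PositiveMatrices

section UnimodularCurve

variable {ι : Type*} [Fintype ι]

theorem hasDerivAt_trace_mul {A B : ℝ → Matrix ι ι ℝ} {A' B' : Matrix ι ι ℝ} {t : ℝ}
    (hA : ∀ i j, HasDerivAt (fun s => A s i j) (A' i j) t)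
    (hB : ∀ i j, HasDerivAt (fun s => B s i j) (B' i j) t) :
    HasDerivAt (fun s => (A s * B s).trace) (A' * B t + A t * B').trace t := by
  simp only [trace, diag, Matrix.add_apply, mul_apply, ← Finset.sum_add_distrib]
  exact .fun_sum fun i _ => .fun_sum fun j _ => (hA i j).mul (hB j i)

variable [DecidableEq ι] {M M' : ℝ → Matrix ι ι ℝ}

theorem trace_deriv_eq_zero_of_det_eq_one {M' : Matrix ι ι ℝ}
    (hM : ∀ i j, HasDerivAt (fun s => M s i j) (M' i j) 0) (hM0 : M 0 = 1)
    (hpos : ∀ᶠ t in 𝓝 0, (M t).PosDef ∧ (M t).det = 1) : M'.trace = 0 := by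
  have hmin : IsLocalMin (fun t => (M t).trace) 0 := by
    filter_upwards [hpos] with t ⟨ht, hdet⟩
    simpa [hM0, hdet] using card_add_log_det_le_trace ht
  exact hmin.hasDerivAt_eq_zero (.fun_sum fun i _ => hM i i)

theorem trace_deriv_mul_self_le_of_det_eq_one {M'' : Matrix ι ι ℝ}
    (hM : ∀ t i j, HasDerivAt (fun s => M s i j) (M' t i j) t)
    (hM' : ∀ i j, HasDerivAt (fun s => M' s i j) (M'' i j) 0) (hM0 : M 0 = 1)
    (hpos : ∀ᶠ t in 𝓝 0, (M t).PosDef ∧ (M t).det = 1) :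
    (M' 0 * M' 0).trace ≤ M''.trace := by
  have hneg {f : ℝ → ℝ} {f' t : ℝ} (h : HasDerivAt f f' (-t)) :
      HasDerivAt (fun s => f (-s)) (-f') t := by
    simpa [Function.comp_def] using h.comp t (hasDerivAt_neg t)
  have htendsto : Tendsto (fun t : ℝ => -t) (𝓝 0) (𝓝 0) := by
    simpa using (continuous_neg (G := ℝ)).tendsto 0
  -- Pairing `M t` with `M (-t)` makes the first order terms cancel.
  have hmin : IsLocalMin (fun t => (M t * M (-t)).trace) 0 := by
    filter_upwards [hpos, htendsto.eventually hpos] with t ⟨ht, hdet⟩ ⟨ht', hdet'⟩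
    simpa [hM0, hdet, hdet'] using card_add_log_det_add_log_det_le_trace_mul ht ht'
  have hderiv (t : ℝ) : HasDerivAt (fun s => (M s * M (-s)).trace)
      ((M' t * M (-t)).trace + (M t * -M' (-t)).trace) t := by
    rw [← trace_add]
    exact hasDerivAt_trace_mul (hM t) fun i j => hneg (hM (-t) i j)
  have hderiv₂ : HasDerivAt (fun s => (M' s * M (-s)).trace + (M s * -M' (-s)).trace)
      ((M'' * M (-0) + M' 0 * -M' (-0)).trace + (M' 0 * -M' (-0) + M 0 * M'').trace) 0 := by
    refine (hasDerivAt_trace_mul hM' fun i j => hneg (hM (-0) i j)).add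
      (hasDerivAt_trace_mul (hM 0) fun i j => ?_)
    simpa using (hneg (t := 0) (by simpa using hM' i j)).fun_neg
  have hnonneg := (deriv_eq_zero_and_nonneg_of_isLocalMin (.of_forall hderiv) hderiv₂ hmin).2
  simp only [neg_zero, hM0, mul_neg, mul_one, one_mul, trace_add, trace_neg] at hnonneg
  linarith

end UnimodularCurve

section SymmetricMatrixInequality

variable {ι : Type*} [Fintype ι]

theorem two_mul_sub_sq_le_trace_mul_self {S : Matrix ι ι ℝ} (hS : S.IsSymm) {c : ι → ℝ}
    (hc : 0 < c ⬝ᵥ c) :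
    2 * (c ⬝ᵥ c) * (S *ᵥ c ⬝ᵥ S *ᵥ c) - (c ⬝ᵥ S *ᵥ c) ^ 2 ≤ (c ⬝ᵥ c) ^ 2 * (S * S).trace := by
  set b := c ⬝ᵥ c with hb
  set y := S *ᵥ c with hy
  set q := c ⬝ᵥ y
  have hvec : c ᵥ* S = y := by rw [hy, ← mulVec_transpose, hS.eq]
  -- `Z` is `b² • S` compressed to the orthogonal complement of `c`.
  let Z := b ^ 2 • S - b • (vecMulVec c y + vecMulVec y c) + q • vecMulVec c c
  have hZ : Zᵀ = Z := by
    simp [Z, hS.eq, transpose_vecMulVec, add_comm]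
  have hnonneg : 0 ≤ (Z * Z).trace := by
    simpa [hZ] using (posSemidef_conjTranspose_mul_self Z).trace_nonneg
  have hZc : Z *ᵥ c = 0 := by
    have hyc : y ⬝ᵥ c = q := dotProduct_comm _ _
    simp only [Z, add_mulVec, sub_mulVec, smul_mulVec, vecMulVec_mulVec, hyc, ← hy, ← hb,
      op_smul_eq_smul, smul_add]
    module
  have hZy : Z *ᵥ y ⬝ᵥ c = 0 := by
    rw [dotProduct_comm, dotProduct_mulVec, ← mulVec_transpose, hZ, hZc, zero_dotProduct]
  have hZS : (Z * S).trace = b ^ 2 * (S * S).trace - 2 * b * (y ⬝ᵥ y) + q ^ 2 := by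
    have hySc : c ⬝ᵥ y ᵥ* S = y ⬝ᵥ y := by rw [dotProduct_comm, ← dotProduct_mulVec]
    simp only [Z, Matrix.add_mul, Matrix.sub_mul, Matrix.smul_mul, vecMulVec_mul, hvec, hySc,
      trace_add, trace_sub, trace_smul, trace_vecMulVec, smul_eq_mul]
    ring
  have hZZ : (Z * Z).trace = b ^ 2 * (Z * S).trace := by
    change (Z * (b ^ 2 • S - b • (vecMulVec c y + vecMulVec y c) + q • vecMulVec c c)).trace = _
    simp [Matrix.mul_add, Matrix.mul_sub, mul_vecMulVec, hZc, hZy]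
  rw [hZZ, hZS] at hnonneg
  linarith [nonneg_of_mul_nonneg_right hnonneg (by positivity)]

end SymmetricMatrixInequality

section ComparisonPrinciple

variable {n : ℕ}

theorem le_of_det_hessianMatrix_lt {U : Set (EuclideanSpace ℝ (Fin n))} (hU : IsOpen U)
    (hbdd : Bornology.IsBounded U) {w b : EuclideanSpace ℝ (Fin n) → ℝ} (hw : ContDiff ℝ 2 w)
    (hb : ContDiff ℝ 2 b) (hfrontier : ∀ y ∈ frontier U, b y ≤ w y)
    (hpos : ∀ y ∈ U, (hessianMatrix b y).PosDef)
    (hdet : ∀ y ∈ U, (hessianMatrix w y).det < (hessianMatrix b y).det) :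
    ∀ x ∈ U, b x ≤ w x := by
  intro x hx
  by_contra! hlt
  obtain ⟨z, hz, hmin⟩ := hbdd.isCompact_closure.exists_isMinOn ⟨x, subset_closure hx⟩
    (hw.continuous.sub hb.continuous).continuousOn
  have hneg : w z - b z < 0 := (hmin (subset_closure hx)).trans_lt (sub_neg.2 hlt)
  have hzU : z ∈ U := by
    by_contra hzU
    exact (sub_nonneg.2 (hfrontier z ⟨hz, by rwa [hU.interior_eq]⟩)).not_gt hneg
  have hlocal : IsLocalMin (w - b) z := hmin.isLocalMin (mem_of_superset (hU.mem_nhds hzU)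
    subset_closure)
  have hpsd : (hessianMatrix w z - hessianMatrix b z).PosSemidef :=
    hessianMatrix_sub hw hb z ▸ posSemidef_hessianMatrix_of_isLocalMin (hw.sub hb) hlocal
  exact (det_le_det_of_posSemidef_sub (hpos z hzU) hpsd).not_gt (hdet z hzU)

end ComparisonPrinciple

section SlabBarrier

/-- A quadratic barrier for the part of the ball of radius `R` about `p` that lies in the slab
`a - D ≤ ⟪ν, y⟫ ≤ a`: it is nonpositive there, and only of size `ε * R ^ 2` on the face
`⟪ν, y⟫ = a`. -/
noncomputable def slabBarrier {E : Type*} [NormedAddCommGroup E] [InnerProductSpace ℝ E]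
    (p ν : E) (R a D ε K : ℝ) (y : E) : ℝ :=
  ε * (‖y - p‖ ^ 2 - R ^ 2) + K / 2 * ((a - ⟪ν, y⟫) ^ 2 - D * (a - ⟪ν, y⟫))

variable {E : Type*} [NormedAddCommGroup E] [InnerProductSpace ℝ E] {p ν : E} {R a D ε K : ℝ}

theorem contDiff_slabBarrier {k : WithTop ℕ∞} : ContDiff ℝ k (slabBarrier p ν R a D ε K) := by
  have hnorm : ContDiff ℝ k fun y : E => ‖y - p‖ ^ 2 := (contDiff_id.sub contDiff_const).norm_sq ℝ
  have hinner : ContDiff ℝ k fun y : E => ⟪ν, y⟫ := contDiff_const.inner ℝ contDiff_id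
  unfold slabBarrier
  fun_prop

theorem slabBarrier_nonpos (hε : 0 ≤ ε) (hK : 0 ≤ K) {y : E} (hball : ‖y - p‖ ≤ R)
    (hslab : ⟪ν, y⟫ ∈ Icc (a - D) a) : slabBarrier p ν R a D ε K y ≤ 0 := by
  have hR : ‖y - p‖ ^ 2 ≤ R ^ 2 := by gcongr
  have hface : (a - ⟪ν, y⟫) ^ 2 - D * (a - ⟪ν, y⟫) ≤ 0 := by nlinarith [hslab.1, hslab.2]
  exact add_nonpos (mul_nonpos_of_nonneg_of_nonpos hε (sub_nonpos.2 hR))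
    (mul_nonpos_of_nonneg_of_nonpos (by positivity) hface)

theorem neg_slabBarrier_le (hε : 0 ≤ ε) (hK : 0 ≤ K) (y : E) :
    -slabBarrier p ν R a D ε K y ≤ ε * R ^ 2 + K / 2 * D * (a - ⟪ν, y⟫) := by
  have hball : 0 ≤ ε * ‖y - p‖ ^ 2 := by positivity
  have hface : 0 ≤ K / 2 * (a - ⟪ν, y⟫) ^ 2 := by positivity
  unfold slabBarrier
  linarith

theorem dirDeriv_slabBarrier (v : E) : ∂[v] (slabBarrier p ν R a D ε K) =
    fun y => ε * (2 * ⟪y - p, v⟫) + K / 2 * ((D - 2 * (a - ⟪ν, y⟫)) * ⟪ν, v⟫) := by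
  ext y
  have hnorm : HasFDerivAt (fun y => ‖y - p‖ ^ 2) (2 • innerSL ℝ (y - p)) y := by
    simpa using ((hasFDerivAt_id y).sub_const p).norm_sq
  have hface : HasFDerivAt (fun y => a - ⟪ν, y⟫) (-innerSL ℝ ν) y :=
    (innerSL ℝ ν).hasFDerivAt.const_sub a
  have hderiv := ((hnorm.sub_const (R ^ 2)).const_mul ε).add
    (((hface.pow 2).sub (hface.const_mul D)).const_mul (K / 2))
  refine (congrArg (· v) hderiv.fderiv).trans ?_
  simp only [map_sub, Nat.add_one_sub_one, pow_one, nsmul_eq_mul, Nat.cast_ofNat, smul_neg,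
    sub_neg_eq_add, smul_add, _root_.add_apply, _root_.smul_apply, _root_.sub_apply,
    coe_innerSL_apply, smul_eq_mul, _root_.neg_apply, inner_sub_left]
  ring

theorem dirDeriv_dirDeriv_slabBarrier (u v y : E) :
    ∂[u] ∂[v] (slabBarrier p ν R a D ε K) y = 2 * ε * ⟪u, v⟫ + K * (⟪ν, u⟫ * ⟪ν, v⟫) := by
  have hball : HasFDerivAt (fun y => ⟪y - p, v⟫) (innerSL ℝ v) y := by
    simpa [inner_sub_left, real_inner_comm] using
      ((innerSL ℝ v).hasFDerivAt (x := y)).sub_const ⟪p, v⟫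
  have hface : HasFDerivAt (fun y => a - ⟪ν, y⟫) (-innerSL ℝ ν) y :=
    (innerSL ℝ ν).hasFDerivAt.const_sub a
  have hderiv := ((hball.const_mul 2).const_mul ε).add
    ((((hface.const_mul 2).const_sub D).mul_const ⟪ν, v⟫).const_mul (K / 2))
  rw [dirDeriv_slabBarrier]
  refine (congrArg (· u) hderiv.fderiv).trans ?_
  simp only [smul_neg, neg_neg, _root_.add_apply, _root_.smul_apply, coe_innerSL_apply,
    real_inner_comm, smul_eq_mul]
  ring

variable {n : ℕ} {p ν : EuclideanSpace ℝ (Fin n)}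

theorem hessianMatrix_slabBarrier (y : EuclideanSpace ℝ (Fin n)) :
    hessianMatrix (slabBarrier p ν R a D ε K) y = (2 * ε) • 1 + K • vecMulVec ν ν := by
  ext i j
  refine (dirDeriv_dirDeriv_slabBarrier _ _ y).trans ?_
  simp [EuclideanSpace.inner_single_right, vecMulVec_apply, Matrix.one_apply, eq_comm]

theorem posDef_hessianMatrix_slabBarrier (hε : 0 < ε) (hK : 0 ≤ K)
    (y : EuclideanSpace ℝ (Fin n)) :
    (hessianMatrix (slabBarrier p ν R a D ε K) y).PosDef := by
  rw [hessianMatrix_slabBarrier]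
  exact (PosDef.one.smul (by positivity)).add_posSemidef
    ((posSemidef_vecMulVec_self_star ν.ofLp).smul hK)

theorem det_hessianMatrix_slabBarrier (hε : ε ≠ 0) (hν : ‖ν‖ = 1)
    (y : EuclideanSpace ℝ (Fin n)) :
    (hessianMatrix (slabBarrier p ν R a D ε K) y).det = (2 * ε) ^ n + (2 * ε) ^ (n - 1) * K := by
  have hn : n ≠ 0 := by
    rintro rfl
    simp [Subsingleton.elim ν 0] at hν
  have hνν : ν ⬝ᵥ ν = (1 : ℝ) := by
    simpa [dotProduct, sq, hν] using (EuclideanSpace.real_norm_sq_eq ν).symm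
  have hfactor : (2 * ε) • 1 + K • vecMulVec ν ν =
      (2 * ε) • (1 + vecMulVec ((K / (2 * ε)) • ν) ν.ofLp) := by
    rw [smul_add, WithLp.ofLp_smul, smul_vecMulVec, smul_smul, mul_div_cancel₀ _ (by positivity)]
  rw [hessianMatrix_slabBarrier, hfactor, det_smul, Fintype.card_fin, vecMulVec_eq Unit,
    det_one_add_replicateCol_mul_replicateRow]
  simp only [WithLp.ofLp_smul, dotProduct_smul, hνν, smul_eq_mul, mul_one]
  rw [← pow_sub_one_mul hn (2 * ε)]
  field_simp

end SlabBarrier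

section GradientBound

variable {n : ℕ} {w : EuclideanSpace ℝ (Fin n) → ℝ} {p : EuclideanSpace ℝ (Fin n)} {R : ℝ}

theorem neg_le_of_subset_slab (hw : ContDiff ℝ 2 w)
    (hdet : ∀ y, w y < 0 → (hessianMatrix w y).det = 1) (hball : {y | w y < 0} ⊆ Metric.ball p R)
    {ν : EuclideanSpace ℝ (Fin n)} (hν : ‖ν‖ = 1) {a D : ℝ}
    (hslab : ∀ y, w y < 0 → ⟪ν, y⟫ ∈ Icc (a - D) a) {ε : ℝ} (hε : 0 < ε)
    {x : EuclideanSpace ℝ (Fin n)} (hx : w x < 0) :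
    -w x ≤ ε * R ^ 2 + ((2 * ε) ^ (n - 1))⁻¹ / 2 * D * (a - ⟪ν, x⟫) := by
  set K : ℝ := ((2 * ε) ^ (n - 1))⁻¹ with hK
  have hKpos : 0 < K := by positivity
  have hopen : IsOpen {y | w y < 0} := isOpen_lt hw.continuous continuous_const
  have hclosure : closure {y | w y < 0} ⊆
      Metric.closedBall p R ∩ (⟪ν, ·⟫) ⁻¹' Icc (a - D) a :=
    closure_minimal (fun y hy => ⟨Metric.ball_subset_closedBall (hball hy), hslab y hy⟩)
      (Metric.isClosed_closedBall.inter (isClosed_Icc.preimage (by fun_prop)))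
  have hfrontier (y) (hy : y ∈ frontier {y | w y < 0}) :
      slabBarrier p ν R a D ε K y ≤ w y := by
    have hnonneg : 0 ≤ w y := not_lt.1 fun hlt => hy.2 (hopen.interior_eq.symm ▸ hlt)
    obtain ⟨hyball, hyslab⟩ := hclosure hy.1
    exact (slabBarrier_nonpos hε.le hKpos.le (mem_closedBall_iff_norm.1 hyball) hyslab).trans
      hnonneg
  have hdet' (y) (hy : w y < 0) :
      (hessianMatrix w y).det < (hessianMatrix (slabBarrier p ν R a D ε K) y).det := by
    rw [hdet y hy, det_hessianMatrix_slabBarrier hε.ne' hν, hK, mul_inv_cancel₀ (by positivity)]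
    exact lt_add_of_pos_left 1 (by positivity)
  have hcomp := le_of_det_hessianMatrix_lt hopen (Metric.isBounded_ball.subset hball) hw
    contDiff_slabBarrier hfrontier
    (fun y _ => posDef_hessianMatrix_slabBarrier hε hKpos.le y) hdet' x hx
  linarith [neg_slabBarrier_le (p := p) (ν := ν) (R := R) (a := a) (D := D) hε.le hKpos.le x]

/-- The bound on `‖∇w‖` over `{w ≤ -δ}` given by comparison with `slabBarrier`. -/
noncomputable def gradientConstant (n : ℕ) (R δ : ℝ) : ℝ := 4 * R * (R ^ 2 / δ) ^ (n - 1)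

theorem inner_mem_Icc_of_convexOn {E : Type*} [NormedAddCommGroup E] [InnerProductSpace ℝ E]
    {w : E → ℝ} {p x y ν : E} (hw : Differentiable ℝ w) (hc : ConvexOn ℝ univ w)
    (hball : {y | w y < 0} ⊆ Metric.ball p R) (hx : w x < 0) (hν : ‖ν‖ = 1) {s : ℝ} (hs : 0 < s)
    (hgrad : ∀ v, ∂[v] w x = s * ⟪ν, v⟫) (hy : w y < 0) :
    ⟪ν, y⟫ ∈ Icc (⟪ν, x⟫ + min (-w x / s) (2 * R) - 4 * R) (⟪ν, x⟫ + min (-w x / s) (2 * R)) := by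
  have hdist : |⟪ν, y⟫ - ⟪ν, x⟫| ≤ 2 * R := by
    calc |⟪ν, y⟫ - ⟪ν, x⟫| = |⟪ν, y - x⟫| := by rw [inner_sub_right]
      _ ≤ dist y x := by
        simpa [hν, dist_eq_norm] using abs_real_inner_le_norm ν (y - x)
      _ ≤ dist y p + dist x p := dist_triangle_right ..
      _ ≤ 2 * R := by linarith [Metric.mem_ball.1 (hball hx), Metric.mem_ball.1 (hball hy)]
  have htangent : ⟪ν, y⟫ - ⟪ν, x⟫ ≤ -w x / s := by
    have hle := add_dirDeriv_le_of_convexOn hw hc x (y - x)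
    rw [hgrad, add_sub_cancel, inner_sub_right] at hle
    rw [le_div_iff₀ hs]
    linarith
  have hmin : min (-w x / s) (2 * R) ≤ 2 * R := min_le_right _ _
  obtain ⟨hlower, hupper⟩ := abs_le.1 hdist
  exact ⟨by linarith, by linarith [le_min htangent hupper]⟩

theorem le_gradientConstant (hw : ContDiff ℝ 2 w) (hc : ConvexOn ℝ univ w)
    (hdet : ∀ y, w y < 0 → (hessianMatrix w y).det = 1) (hball : {y | w y < 0} ⊆ Metric.ball p R)
    {δ : ℝ} (hδ : 0 < δ) {x ν : EuclideanSpace ℝ (Fin n)} (hx : w x ≤ -δ) (hν : ‖ν‖ = 1)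
    {s : ℝ} (hs : 0 < s) (hgrad : ∀ v, ∂[v] w x = s * ⟪ν, v⟫) : s ≤ gradientConstant n R δ := by
  have hxneg : w x < 0 := by linarith
  have hR : 0 < R := Metric.pos_of_mem_ball (hball hxneg)
  have hbarrier := neg_le_of_subset_slab hw hdet hball hν
    (fun y hy => inner_mem_Icc_of_convexOn (hw.differentiable (by norm_num)) hc hball hxneg hν
      hs hgrad hy) (ε := δ / (2 * R ^ 2)) (by positivity) hxneg
  have hK : ((2 * (δ / (2 * R ^ 2))) ^ (n - 1))⁻¹ = (R ^ 2 / δ) ^ (n - 1) := by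
    rw [← inv_pow]
    congr 1
    field_simp
  have hεR : δ / (2 * R ^ 2) * R ^ 2 = δ / 2 := by field_simp
  rw [hK, hεR, add_sub_cancel_left] at hbarrier
  have hhalf : -w x / 2 ≤ gradientConstant n R δ / 2 * (-w x / s) := calc
    -w x / 2 ≤ (R ^ 2 / δ) ^ (n - 1) / 2 * (4 * R) * min (-w x / s) (2 * R) := by linarith
    _ ≤ (R ^ 2 / δ) ^ (n - 1) / 2 * (4 * R) * (-w x / s) := by gcongr; exact min_le_left _ _
    _ = gradientConstant n R δ / 2 * (-w x / s) := by rw [gradientConstant]; ring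
  rw [mul_div_assoc', le_div_iff₀ hs] at hhalf
  exact le_of_mul_le_mul_left (by linarith) (neg_pos.2 hxneg)

theorem norm_fderiv_le_gradientConstant (hw : ContDiff ℝ 2 w) (hc : ConvexOn ℝ univ w)
    (hdet : ∀ y, w y < 0 → (hessianMatrix w y).det = 1) (hball : {y | w y < 0} ⊆ Metric.ball p R)
    {δ : ℝ} (hδ : 0 < δ) {x : EuclideanSpace ℝ (Fin n)} (hx : w x ≤ -δ) :
    ‖fderiv ℝ w x‖ ≤ gradientConstant n R δ := by
  set g := (InnerProductSpace.toDual ℝ _).symm (fderiv ℝ w x) with hg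
  rw [← LinearIsometryEquiv.norm_map (InnerProductSpace.toDual ℝ _).symm, ← hg]
  rcases eq_or_ne g 0 with hg0 | hg0
  · have hR : 0 < R := Metric.pos_of_mem_ball (hball (show w x < 0 by linarith))
    rw [hg0, norm_zero, gradientConstant]
    positivity
  · have hgpos : 0 < ‖g‖ := norm_pos_iff.2 hg0
    refine le_gradientConstant (ν := ‖g‖⁻¹ • g) hw hc hdet hball hδ hx ?_ hgpos fun v => ?_
    · rw [norm_smul, norm_inv, norm_norm, inv_mul_cancel₀ hgpos.ne']
    · rw [real_inner_smul_left, mul_inv_cancel_left₀ hgpos.ne', hg,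
        InnerProductSpace.toDual_symm_apply, dirDeriv]

end GradientBound

section DifferentiatedEquation

variable {n : ℕ} {w : EuclideanSpace ℝ (Fin n) → ℝ} {z : EuclideanSpace ℝ (Fin n)}
  {v : Fin n → EuclideanSpace ℝ (Fin n)}

/-- The matrix of the bilinear form `D²w(x)` on a family of vectors, which need not be orthonormal.
-/
noncomputable def frameHessian {E ι : Type*} [NormedAddCommGroup E] [NormedSpace ℝ E]
    (w : E → ℝ) (v : ι → E) (x : E) : Matrix ι ι ℝ :=
  Matrix.of fun i j => ∂[v i] ∂[v j] w x

theorem frameHessian_eq_transpose_mul_mul (hw : ContDiff ℝ 2 w)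
    (V : Matrix (Fin n) (Fin n) ℝ) (x : EuclideanSpace ℝ (Fin n)) :
    frameHessian w (fun i => WithLp.toLp 2 (V.col i)) x = Vᵀ * hessianMatrix w x * V := by
  ext i j
  rw [Matrix.mul_assoc]
  exact dirDeriv_dirDeriv_eq_dotProduct_hessianMatrix hw _ _ x

theorem exists_frameHessian_eq_one (hw : ContDiff ℝ 2 w) (hpos : (hessianMatrix w z).PosDef)
    (e : EuclideanSpace ℝ (Fin n)) :
    ∃ (v : Fin n → EuclideanSpace ℝ (Fin n)) (c : Fin n → ℝ),
      frameHessian w v z = 1 ∧ ∑ i, c i • v i = e := by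
  obtain ⟨P, hP⟩ := exists_eq_transpose_mul_self hpos.posSemidef
  have hunit : IsUnit P.det := by
    have hdet := hpos.det_pos.ne'
    rw [hP, det_mul] at hdet
    exact (right_ne_zero_of_mul hdet).isUnit
  refine ⟨fun i => WithLp.toLp 2 (P⁻¹.col i), P *ᵥ e, ?_, ?_⟩
  · rw [frameHessian_eq_transpose_mul_mul hw, hP, Matrix.mul_assoc, Matrix.mul_assoc,
      mul_nonsing_inv P hunit, Matrix.mul_one, ← transpose_mul, mul_nonsing_inv P hunit,
      transpose_one]
  · have hcancel : P⁻¹ *ᵥ P *ᵥ e = e := by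
      rw [mulVec_mulVec, nonsing_inv_mul P hunit, one_mulVec]
    rw [mulVec_eq_sum] at hcancel
    ext k
    simpa using congrFun hcancel k

theorem eventually_posDef_frameHessian (hw : ContDiff ℝ 2 w)
    (hpos : ∀ᶠ x in 𝓝 z, (hessianMatrix w x).PosDef ∧ (hessianMatrix w x).det = 1)
    (hv : frameHessian w v z = 1) :
    ∀ᶠ x in 𝓝 z, (frameHessian w v x).PosDef ∧ (frameHessian w v x).det = 1 := by
  set V : Matrix (Fin n) (Fin n) ℝ := Matrix.of fun k i => v i k
  have hV (x) : frameHessian w v x = Vᵀ * hessianMatrix w x * V :=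
    frameHessian_eq_transpose_mul_mul hw V x
  have hdet (x) (hx : (hessianMatrix w x).det = 1) :
      (frameHessian w v x).det = V.det * V.det := by
    rw [hV, det_mul, det_mul, det_transpose, hx, mul_one]
  have hdetV : V.det * V.det = 1 := by rw [← hdet z hpos.self_of_nhds.2, hv, det_one]
  filter_upwards [hpos] with x ⟨hx, hxdet⟩
  have hxdet' : (frameHessian w v x).det = 1 := (hdet x hxdet).trans hdetV
  refine ⟨PosSemidef.posDef_iff_det_ne_zero ?_ |>.2 (by simp [hxdet']), hxdet'⟩
  simpa [hV] using hx.posSemidef.conjTranspose_mul_mul_same V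

theorem hasDerivAt_frameHessian {E ι : Type*} [NormedAddCommGroup E] [NormedSpace ℝ E]
    {w : E → ℝ} (hw : ContDiff ℝ 3 w) (v : ι → E) (x e : E) (t : ℝ) (i j : ι) :
    HasDerivAt (fun s : ℝ => frameHessian w v (x + s • e) i j)
      (frameHessian ∂[e] w v (x + t • e) i j) t := by
  have hj : ContDiff ℝ 2 ∂[v j] w := contDiff_dirDeriv hw (v j)
  have hij : ContDiff ℝ 1 ∂[v i] ∂[v j] w := contDiff_dirDeriv hj (v i)
  have hcomm : ∂[v i] ∂[v j] ∂[e] w = ∂[e] ∂[v i] ∂[v j] w := by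
    rw [dirDeriv_comm hw (v j) e, dirDeriv_comm hj (v i) e]
  simpa [frameHessian, hcomm] using
    hasDerivAt_comp_add_smul (hij.differentiable (by norm_num)) x e t

theorem eventually_posDef_frameHessian_comp_add_smul (hw : ContDiff ℝ 2 w)
    (hpos : ∀ᶠ x in 𝓝 z, (hessianMatrix w x).PosDef ∧ (hessianMatrix w x).det = 1)
    (hv : frameHessian w v z = 1) (e : EuclideanSpace ℝ (Fin n)) :
    ∀ᶠ t : ℝ in 𝓝 0,
      (frameHessian w v (z + t • e)).PosDef ∧ (frameHessian w v (z + t • e)).det = 1 :=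
  (tendsto_add_smul z e).eventually (eventually_posDef_frameHessian hw hpos hv)

theorem trace_frameHessian_dirDeriv_eq_zero (hw : ContDiff ℝ 3 w)
    (hpos : ∀ᶠ x in 𝓝 z, (hessianMatrix w x).PosDef ∧ (hessianMatrix w x).det = 1)
    (hv : frameHessian w v z = 1) (e : EuclideanSpace ℝ (Fin n)) :
    (frameHessian ∂[e] w v z).trace = 0 := by
  have hderiv := hasDerivAt_frameHessian hw v z e 0
  simp only [zero_smul, add_zero] at hderiv
  exact trace_deriv_eq_zero_of_det_eq_one hderiv (by simpa using hv)
    (eventually_posDef_frameHessian_comp_add_smul (hw.of_le (by norm_num)) hpos hv e)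

theorem trace_frameHessian_dirDeriv_mul_self_le (hw : ContDiff ℝ 4 w)
    (hpos : ∀ᶠ x in 𝓝 z, (hessianMatrix w x).PosDef ∧ (hessianMatrix w x).det = 1)
    (hv : frameHessian w v z = 1) (e : EuclideanSpace ℝ (Fin n)) :
    (frameHessian ∂[e] w v z * frameHessian ∂[e] w v z).trace ≤
      (frameHessian ∂[e] ∂[e] w v z).trace := by
  have hderiv := hasDerivAt_frameHessian (hw.of_le (by norm_num)) v z e
  have hderiv₂ := hasDerivAt_frameHessian (contDiff_dirDeriv hw e) v z e 0
  simpa using trace_deriv_mul_self_le_of_det_eq_one hderiv hderiv₂ (by simpa using hv)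
    (eventually_posDef_frameHessian_comp_add_smul (hw.of_le (by norm_num)) hpos hv e)

end DifferentiatedEquation

section PogorelovFunction

theorem log_deriv_of_isLocalMax_mul_mul_exp {p p' q q' r r' : ℝ → ℝ} {p'' q'' r'' a : ℝ}
    (hp : ∀ t, HasDerivAt p (p' t) t) (hp' : HasDerivAt p' p'' a)
    (hq : ∀ t, HasDerivAt q (q' t) t) (hq' : HasDerivAt q' q'' a)
    (hr : ∀ t, HasDerivAt r (r' t) t) (hr' : HasDerivAt r' r'' a)
    (hpa : 0 < p a) (hqa : 0 < q a)
    (hmax : IsLocalMax (fun t => p t * q t * exp (r t ^ 2 / 2)) a) :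
    p' a / p a + q' a / q a + r a * r' a = 0 ∧
      p'' / p a - (p' a / p a) ^ 2 + (q'' / q a - (q' a / q a) ^ 2) +
        (r' a ^ 2 + r a * r'') ≤ 0 := by
  have hpos : ∀ᶠ t in 𝓝 a, 0 < p t ∧ 0 < q t :=
    ((hp a).continuousAt.eventually_const_lt hpa).and
      ((hq a).continuousAt.eventually_const_lt hqa)
  have hderiv : ∀ᶠ t in 𝓝 a, HasDerivAt (fun t => -(log (p t) + log (q t) + r t ^ 2 / 2))
      (-(p' t / p t + q' t / q t + r t * r' t)) t := by
    filter_upwards [hpos] with t ⟨hpt, hqt⟩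
    refine ((((hp t).log hpt.ne').add ((hq t).log hqt.ne')).add
      (((hr t).pow 2).div_const 2)).fun_neg.congr_deriv ?_
    simp only [Nat.cast_ofNat]
    ring
  have hderiv₂ : HasDerivAt (fun t => -(p' t / p t + q' t / q t + r t * r' t))
      (-(p'' / p a - (p' a / p a) ^ 2 + (q'' / q a - (q' a / q a) ^ 2) +
        (r' a ^ 2 + r a * r''))) a := by
    refine (((hp'.div (hp a) hpa.ne').add (hq'.div (hq a) hqa.ne')).add
      ((hr a).mul hr')).fun_neg.congr_deriv ?_
    field_simp
  have hlog {t : ℝ} (hpt : 0 < p t) (hqt : 0 < q t) :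
      log (p t * q t * exp (r t ^ 2 / 2)) = log (p t) + log (q t) + r t ^ 2 / 2 := by
    rw [log_mul (by positivity) (by positivity), log_mul hpt.ne' hqt.ne', log_exp]
  have hmin : IsLocalMin (fun t => -(log (p t) + log (q t) + r t ^ 2 / 2)) a := by
    filter_upwards [hpos, hmax] with t ⟨hpt, hqt⟩ hle
    rw [← hlog hpt hqt, ← hlog hpa hqa]
    exact neg_le_neg (log_le_log (by positivity) hle)
  obtain ⟨hfirst, hsecond⟩ := deriv_eq_zero_and_nonneg_of_isLocalMin hderiv hderiv₂ hmin
  exact ⟨neg_eq_zero.1 hfirst, neg_nonneg.1 hsecond⟩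

/-- Pogorelov's auxiliary function `(-w - η) w_ee exp (w_e ^ 2 / 2)` for the direction `e`, cut off
at the level `w = -η`. -/
noncomputable def pogorelovFunction {E : Type*} [NormedAddCommGroup E] [NormedSpace ℝ E]
    (w : E → ℝ) (η : ℝ) (e x : E) : ℝ :=
  (-w x - η) * ∂[e] ∂[e] w x * exp (∂[e] w x ^ 2 / 2)

variable {E : Type*} [NormedAddCommGroup E] [NormedSpace ℝ E] {w : E → ℝ} {η : ℝ} {e z : E}

theorem continuous_pogorelovFunction (hw : ContDiff ℝ 2 w) (η : ℝ) (e : E) :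
    Continuous (pogorelovFunction w η e) := by
  have hw₁ : ContDiff ℝ 1 ∂[e] w := contDiff_dirDeriv hw e
  have hw₂ : ContDiff ℝ 0 ∂[e] ∂[e] w := contDiff_dirDeriv hw₁ e
  have := hw.continuous
  have := hw₁.continuous
  have := hw₂.continuous
  unfold pogorelovFunction
  fun_prop

theorem dirDeriv_of_isLocalMax_pogorelovFunction (hw : ContDiff ℝ 4 w) (hp : 0 < -w z - η)
    (hb : 0 < ∂[e] ∂[e] w z) (hmax : IsLocalMax (pogorelovFunction w η e) z) (v : E) :
    -∂[v] w z / (-w z - η) + ∂[v] ∂[e] ∂[e] w z / ∂[e] ∂[e] w z + ∂[e] w z * ∂[v] ∂[e] w z = 0 ∧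
      -∂[v] ∂[v] w z / (-w z - η) - (-∂[v] w z / (-w z - η)) ^ 2 +
        (∂[v] ∂[v] ∂[e] ∂[e] w z / ∂[e] ∂[e] w z -
          (∂[v] ∂[e] ∂[e] w z / ∂[e] ∂[e] w z) ^ 2) +
        (∂[v] ∂[e] w z ^ 2 + ∂[e] w z * ∂[v] ∂[v] ∂[e] w z) ≤ 0 := by
  have hline : IsLocalMax (fun t : ℝ => pogorelovFunction w η e (z + t • v)) 0 := by
    simpa [IsLocalMax, IsMaxFilter] using (tendsto_add_smul z v).eventually hmax
  have hwe : ContDiff ℝ 3 ∂[e] w := contDiff_dirDeriv hw e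
  have hwee : ContDiff ℝ 2 ∂[e] ∂[e] w := contDiff_dirDeriv hwe e
  have hderiv {f : E → ℝ} (hf : ContDiff ℝ 2 f) :=
    hasDerivAt_comp_add_smul (hf.differentiable (by norm_num)) z v
  have hderiv₂ {f : E → ℝ} (hf : ContDiff ℝ 2 f) :=
    hasDerivAt_comp_add_smul ((contDiff_dirDeriv (m := 1) hf v).differentiable (by norm_num)) z v 0
  have hw2 : ContDiff ℝ 2 w := hw.of_le (by norm_num)
  have hwe2 : ContDiff ℝ 2 ∂[e] w := hwe.of_le (by norm_num)
  simpa using log_deriv_of_isLocalMax_mul_mul_exp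
    (fun t => (hderiv hw2 t).fun_neg.sub_const η) (hderiv₂ hw2).fun_neg
    (hderiv hwee) (hderiv₂ hwee) (hderiv hwe2) (hderiv₂ hwe2) (by simpa using hp)
    (by simpa using hb) hline

/-- The correspondence with the maximum point of `pogorelovFunction` is `p = -w - η`, `b = w_ee`,
`r = w_e` and, in a frame in which the Hessian is the identity, `a i = w_i`, `c i = w_ie`,
`y i = w_iee`, `σ i = w_iie`, `τ i = w_iiee`. -/
theorem sq_mul_le_of_critical_inequalities {ι : Type*} [Fintype ι] {a c y σ τ : ι → ℝ}
    {p b r : ℝ} (hp : 0 < p) (hb : 0 < b)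
    (hfirst : ∀ i, -a i / p + y i / b + r * c i = 0)
    (hsecond : ∀ i, -1 / p - (-a i / p) ^ 2 + (τ i / b - (y i / b) ^ 2) +
      (c i ^ 2 + r * σ i) ≤ 0)
    (hcc : c ⬝ᵥ c = b) (hca : c ⬝ᵥ a = r) (hσ : ∑ i, σ i = 0)
    (hτ : 2 * b * (y ⬝ᵥ y) - (c ⬝ᵥ y) ^ 2 ≤ b ^ 2 * ∑ i, τ i) :
    (p * b) ^ 2 ≤ Fintype.card ι * (p * b) + r ^ 2 := by
  set q := c ⬝ᵥ y
  set Y := y ⬝ᵥ y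
  have ha (i) : a i / p = y i / b + r * c i := by linarith [hfirst i, neg_div p (a i)]
  have hrp : r / p = q / b + r * b := by
    calc r / p = ∑ i, c i * (a i / p) := by
          rw [← hca, dotProduct, Finset.sum_div]
          exact Finset.sum_congr rfl fun i _ => mul_div_assoc _ _ _
      _ = ∑ i, (c i * y i / b + r * (c i * c i)) :=
          Finset.sum_congr rfl fun i _ => by rw [ha]; ring
      _ = q / b + r * b := by
          rw [Finset.sum_add_distrib, ← Finset.sum_div, ← Finset.mul_sum, ← hcc]
          rfl
  have hsum : -(Fintype.card ι / p) - 2 / b ^ 2 * Y - 2 * r / b * q - r ^ 2 * b +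
      (∑ i, τ i) / b + b ≤ 0 := by
    calc _ = ∑ i, (-(1 / p) - 2 / b ^ 2 * (y i * y i) - 2 * r / b * (c i * y i) -
          r ^ 2 * (c i * c i) + τ i / b + c i * c i + r * σ i) := by
          simp only [Finset.sum_add_distrib, Finset.sum_sub_distrib, ← Finset.mul_sum,
            ← Finset.sum_div, show ∑ i, c i * c i = b from hcc, hσ]
          simp [Y, q, dotProduct, div_eq_mul_inv]
      _ ≤ 0 := Finset.sum_nonpos fun i _ => by
          refine (hsecond i).trans_eq' ?_
          rw [neg_div, neg_div, ha i]
          ring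
  have hτb : (2 * b * Y - q ^ 2) / b ^ 3 ≤ (∑ i, τ i) / b := by
    rw [div_le_div_iff₀ (by positivity) hb]
    nlinarith
  have hb_le : b ≤ Fintype.card ι / p + (r / p) ^ 2 / b := by
    have hsq : (2 * b * Y - q ^ 2) / b ^ 3 - 2 / b ^ 2 * Y - 2 * r / b * q - r ^ 2 * b =
        -((r / p) ^ 2 / b) := by
      rw [hrp]
      field_simp
      ring
    linarith
  calc (p * b) ^ 2 = p ^ 2 * b * b := by ring
    _ ≤ p ^ 2 * b * (Fintype.card ι / p + (r / p) ^ 2 / b) := by gcongr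
    _ = Fintype.card ι * (p * b) + r ^ 2 := by field_simp

end PogorelovFunction

section InteriorEstimate

theorem sq_le_of_isLocalMax_pogorelovFunction {n : ℕ} {w : EuclideanSpace ℝ (Fin n) → ℝ}
    {η : ℝ} {e z : EuclideanSpace ℝ (Fin n)} (hw : ContDiff ℝ 4 w)
    (hpos : ∀ᶠ x in 𝓝 z, (hessianMatrix w x).PosDef ∧ (hessianMatrix w x).det = 1)
    (hη : 0 < -w z - η) (he : 0 < ∂[e] ∂[e] w z)
    (hmax : IsLocalMax (pogorelovFunction w η e) z) :
    ((-w z - η) * ∂[e] ∂[e] w z) ^ 2 ≤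
      n * ((-w z - η) * ∂[e] ∂[e] w z) + ∂[e] w z ^ 2 := by
  have hw₂ : ContDiff ℝ 2 w := hw.of_le (by norm_num)
  have hwe : ContDiff ℝ 3 ∂[e] w := contDiff_dirDeriv hw e
  obtain ⟨v, c, hv, hve⟩ := exists_frameHessian_eq_one hw₂ hpos.self_of_nhds.1 e
  set S := frameHessian ∂[e] w v z
  have hS : S.IsSymm := Matrix.IsSymm.ext fun i j => congrFun (dirDeriv_comm hwe _ _) z
  have hexpand (f : EuclideanSpace ℝ (Fin n) → ℝ) : ∂[e] f z = ∑ i, c i * ∂[v i] f z := by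
    rw [← hve, dirDeriv_sum_smul]
  have hvv (i j) : ∂[v i] ∂[v j] w z = (1 : Matrix (Fin n) (Fin n) ℝ) i j := by
    rw [← hv]; rfl
  have hc (i) : ∂[v i] ∂[e] w z = c i := by
    rw [dirDeriv_comm hw₂, hexpand]
    simp [hvv, one_apply]
  have hy (i) : ∂[v i] ∂[e] ∂[e] w z = (S *ᵥ c) i := by
    rw [dirDeriv_comm hwe, hexpand, mulVec, dotProduct_comm, ← hS.eq]
    rfl
  have hcc : c ⬝ᵥ c = ∂[e] ∂[e] w z := by
    rw [hexpand]
    simp only [hc, dotProduct]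
  have hcrit := dirDeriv_of_isLocalMax_pogorelovFunction hw hη he hmax
  have hgap := two_mul_sub_sq_le_trace_mul_self hS (hcc ▸ he)
  rw [hcc] at hgap
  have htrace := trace_frameHessian_dirDeriv_mul_self_le hw hpos hv e
  simpa using sq_mul_le_of_critical_inequalities (σ := S.diag)
    (τ := (frameHessian ∂[e] ∂[e] w v z).diag) hη he
    (fun i => by simpa only [hc, hy] using (hcrit (v i)).1)
    (fun i => by
      have hsecond := (hcrit (v i)).2
      rw [hc, hy, hvv, one_apply_eq] at hsecond
      exact hsecond)
    hcc (hexpand w).symm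
    (trace_frameHessian_dirDeriv_eq_zero (hw.of_le (by norm_num)) hpos hv e)
    (hgap.trans (mul_le_mul_of_nonneg_left htrace (sq_nonneg _)))

theorem pogorelovFunction_le_of_isLocalMax {n : ℕ} {w : EuclideanSpace ℝ (Fin n) → ℝ}
    {η G : ℝ} {e z : EuclideanSpace ℝ (Fin n)} (hw : ContDiff ℝ 4 w)
    (hpos : ∀ᶠ x in 𝓝 z, (hessianMatrix w x).PosDef ∧ (hessianMatrix w x).det = 1)
    (hη : 0 < -w z - η) (he : 0 < ∂[e] ∂[e] w z)
    (hmax : IsLocalMax (pogorelovFunction w η e) z) (hG : |∂[e] w z| ≤ G) :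
    pogorelovFunction w η e z ≤ (n + G) * exp (G ^ 2 / 2) := by
  have hG₀ : 0 ≤ G := (abs_nonneg _).trans hG
  have hsq : ∂[e] w z ^ 2 ≤ G ^ 2 := sq_le_sq' (abs_le.1 hG).1 (abs_le.1 hG).2
  have hcrit := sq_le_of_isLocalMax_pogorelovFunction hw hpos hη he hmax
  have hle : (-w z - η) * ∂[e] ∂[e] w z ≤ n + G := by
    have : (0 : ℝ) ≤ n := n.cast_nonneg
    by_contra! hlt
    nlinarith
  unfold pogorelovFunction
  gcongr

theorem exists_isLocalMax_pogorelovFunction {E : Type*} [NormedAddCommGroup E] [NormedSpace ℝ E]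
    [ProperSpace E] {w : E → ℝ} {η : ℝ} {e x : E} (hw : ContDiff ℝ 2 w) (hc : ConvexOn ℝ univ w)
    (hbdd : Bornology.IsBounded {y | w y ≤ -η}) (hx : 0 < pogorelovFunction w η e x)
    (hxη : w x ≤ -η) :
    ∃ z, 0 < -w z - η ∧ 0 < ∂[e] ∂[e] w z ∧ IsLocalMax (pogorelovFunction w η e) z ∧
      pogorelovFunction w η e x ≤ pogorelovFunction w η e z := by
  have hcompact : IsCompact {y | w y ≤ -η} :=
    Metric.isCompact_of_isClosed_isBounded (isClosed_le hw.continuous continuous_const) hbdd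
  obtain ⟨z, hz, hzmax⟩ := hcompact.exists_isMaxOn ⟨x, hxη⟩
    (continuous_pogorelovFunction hw η e).continuousOn
  have hxz : pogorelovFunction w η e x ≤ pogorelovFunction w η e z := hzmax hxη
  have hne := (hx.trans_le hxz).ne'
  simp only [pogorelovFunction, mul_ne_zero_iff] at hne
  obtain ⟨⟨hwz, hez⟩, -⟩ := hne
  have hη : 0 < -w z - η := lt_of_le_of_ne (by linarith [show w z ≤ -η from hz]) hwz.symm
  refine ⟨z, hη, (dirDeriv_dirDeriv_nonneg_of_convexOn hw hc z e).lt_of_ne' hez, ?_, hxz⟩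
  refine hzmax.isLocalMax ?_
  filter_upwards [hw.continuous.continuousAt.eventually_lt_const (show w z < -η by linarith)]
    with y hy using hy.le

variable {n : ℕ} {w : EuclideanSpace ℝ (Fin n) → ℝ} {p e x : EuclideanSpace ℝ (Fin n)} {R δ : ℝ}

theorem posDef_hessianMatrix_of_convexOn (hw : ContDiff ℝ 2 w) (hc : ConvexOn ℝ univ w)
    (hdet : (hessianMatrix w x).det = 1) : (hessianMatrix w x).PosDef :=
  (posSemidef_hessianMatrix_of_convexOn hw hc x).posDef_iff_det_ne_zero.2 (by simp [hdet])

/-- The bound on `‖D²w‖` over `{w < -δ}` given by Pogorelov's function at the level `-δ / 2`, for a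
section `{w < 0}` contained in a ball of radius `R`. -/
noncomputable def pogorelovConstant (n : ℕ) (R δ : ℝ) : ℝ :=
  2 / δ * ((n + gradientConstant n R (δ / 2)) * exp (gradientConstant n R (δ / 2) ^ 2 / 2))

theorem dirDeriv_dirDeriv_le_pogorelovConstant (hw : ContDiff ℝ 4 w) (hc : ConvexOn ℝ univ w)
    (hdet : ∀ x, w x < 0 → (hessianMatrix w x).det = 1)
    (hball : {x | w x < 0} ⊆ Metric.ball p R) (hδ : 0 < δ) (hx : w x < -δ) (he : ‖e‖ = 1) :
    ∂[e] ∂[e] w x ≤ pogorelovConstant n R δ := by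
  have hw₂ : ContDiff ℝ 2 w := hw.of_le (by norm_num)
  set G := gradientConstant n R (δ / 2)
  have hgrad {z} (hz : w z ≤ -(δ / 2)) : |∂[e] w z| ≤ G := by
    simpa [he, dirDeriv] using (fderiv ℝ w z).le_of_opNorm_le
      (norm_fderiv_le_gradientConstant hw₂ hc hdet hball (half_pos hδ) hz) e
  have hee : 0 ≤ ∂[e] ∂[e] w x := dirDeriv_dirDeriv_nonneg_of_convexOn hw₂ hc x e
  have hG₀ : 0 ≤ G := (abs_nonneg _).trans (hgrad (show w x ≤ -(δ / 2) by linarith))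
  have hlower : δ / 2 * ∂[e] ∂[e] w x ≤ pogorelovFunction w (δ / 2) e x :=
    calc δ / 2 * ∂[e] ∂[e] w x ≤ (-w x - δ / 2) * ∂[e] ∂[e] w x := by gcongr; linarith
      _ ≤ pogorelovFunction w (δ / 2) e x :=
        le_mul_of_one_le_right (mul_nonneg (by linarith) hee) (one_le_exp (by positivity))
  have hupper : pogorelovFunction w (δ / 2) e x ≤ (n + G) * exp (G ^ 2 / 2) := by
    obtain hle | hpos := le_or_gt (pogorelovFunction w (δ / 2) e x) 0
    · exact hle.trans (by positivity)
    have hbdd : Bornology.IsBounded {y | w y ≤ -(δ / 2)} :=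
      Metric.isBounded_ball.subset fun y (hy : w y ≤ _) => hball (show w y < 0 by linarith)
    obtain ⟨z, hz, hez, hmax, hxz⟩ :=
      exists_isLocalMax_pogorelovFunction hw₂ hc hbdd hpos (by linarith)
    have hposDef : ∀ᶠ y in 𝓝 z, (hessianMatrix w y).PosDef ∧ (hessianMatrix w y).det = 1 := by
      filter_upwards [hw.continuous.continuousAt.eventually_lt_const (show w z < 0 by linarith)]
        with y hy using ⟨posDef_hessianMatrix_of_convexOn hw₂ hc (hdet y hy), hdet y hy⟩
    exact hxz.trans
      (pogorelovFunction_le_of_isLocalMax hw hposDef hz hez hmax (hgrad (by linarith)))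
  calc ∂[e] ∂[e] w x = 2 / δ * (δ / 2 * ∂[e] ∂[e] w x) := by field_simp
    _ ≤ 2 / δ * ((n + G) * exp (G ^ 2 / 2)) :=
      mul_le_mul_of_nonneg_left (hlower.trans hupper) (by positivity)

end InteriorEstimate

theorem pogorelov_interior_C2_general {n : ℕ} {w : EuclideanSpace ℝ (Fin n) → ℝ}
    {p x : EuclideanSpace ℝ (Fin n)} {R δ : ℝ} (hw : ContDiff ℝ 4 w) (hc : ConvexOn ℝ univ w)
    (hdet : ∀ x, w x < 0 → (hessianMatrix w x).det = 1)
    (hball : {x | w x < 0} ⊆ Metric.ball p R) (hδ : 0 < δ) (hx : w x < -δ) :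
    ‖Matrix.toEuclideanCLM (𝕜 := ℝ) (hessianMatrix w x)‖ ≤ pogorelovConstant n R δ := by
  have hw₂ : ContDiff ℝ 2 w := hw.of_le (by norm_num)
  have hR : 0 < R := Metric.nonempty_ball.1 ⟨x, hball (show w x < 0 by linarith)⟩
  refine norm_toEuclideanCLM_le_of_posSemidef (posSemidef_hessianMatrix_of_convexOn hw₂ hc x)
    (by unfold pogorelovConstant gradientConstant; positivity) fun e he => ?_
  rw [← dirDeriv_dirDeriv_eq_dotProduct_hessianMatrix hw₂]
  exact dirDeriv_dirDeriv_le_pogorelovConstant hw hc hdet hball hδ hx he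

/-- Pogorelov's interior C² estimate for the Monge–Ampère equation `det D²w = 1`. -/
theorem pogorelov_interior_C2 (n : ℕ) (hn : 2 ≤ n) (κ : ℝ) (hκ : κ ∈ Set.Ioo (0 : ℝ) 1)
    (δ : ℝ) (hδ : 0 < δ) :
    ∃ C : ℝ, 0 < C ∧
      ∀ w : EuclideanSpace ℝ (Fin n) → ℝ,
        ContDiff ℝ (⊤ : ℕ∞) w →
        ConvexOn ℝ Set.univ w →
        (∀ x, w x < 0 → (hessianMatrix w x).det = 1) →
        Metric.ball (0 : EuclideanSpace ℝ (Fin n)) κ ⊆ {x | w x < 0} →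
        {x | w x < 0} ⊆ Metric.ball (0 : EuclideanSpace ℝ (Fin n)) κ⁻¹ →
        ∀ x, w x < -δ → ‖Matrix.toEuclideanCLM (𝕜 := ℝ) (hessianMatrix w x)‖ ≤ C := by
  have hκ₀ : 0 < κ := hκ.1
  exact ⟨pogorelovConstant n κ⁻¹ δ, by unfold pogorelovConstant gradientConstant; positivity,
    fun w hw hc hdet _ hball x hx => pogorelov_interior_C2_general
      (hw.of_le (WithTop.coe_le_coe.2 le_top)) hc hdet hball hδ hx⟩
end

section
/- (Liouville theorem for non-divergence form elliptic equations in the plane) Let λ ∈ (0,1] and let a : ℝ² → (2×2 symmetric matrices) be such that all eigenvalues of a(x) lie in [λ, λ^{-1}] for every x. Let w : ℝ² → ℝ be a smooth function with sup_{x ∈ ℝ²} |∇w(x)| < ∞ satisfying ∑_{i,j} a_{ij}(x) ∂ᵢ∂ⱼw(x) = 0 for every x ∈ ℝ². Then w is affine, i.e. there exist b ∈ ℝ² and c ∈ ℝ with w(x) = ⟨b, x⟩ + c. -/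
open Real

/-!
Since `a : D²w = 0` with `a` elliptic, evaluating the form of `a` on the rows of `D²w` gives
`|D²w|² ≤ K * (-det D²w)`: up to orientation, the map `(∂₀w, ∂₁w)` has bounded distortion. Its
Jacobian is a null Lagrangian, so integrating by parts against a squared cutoff `φ²` yields a
Caccioppoli inequality `∫ φ² (-det D²w) ≤ C ∫ |∇φ|²`, where `C` depends only on `K` and the bound
for one of the two components. In dimension two the Dirichlet energy is scale invariant, so the
average of `N` cutoffs at well-separated scales has energy `O(1 / N)`. Hence `det D²w = 0`, then
`D²w = 0`, and `w` is affine.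
-/

open MeasureTheory Filter Topology Metric Module
open scoped ContDiff

section IntegrationByParts

variable {E : Type*} [NormedAddCommGroup E] [NormedSpace ℝ E] {f g : E → ℝ}

lemma continuous_fderiv_apply_const (hf : ContDiff ℝ 1 f) (c : E) :
    Continuous fun x => fderiv ℝ f x c :=
  (hf.continuous_fderiv one_ne_zero).clm_apply continuous_const

lemma contDiff_fderiv_apply_const (hf : ContDiff ℝ 2 f) (c : E) :
    ContDiff ℝ 1 fun x => fderiv ℝ f x c :=
  (hf.fderiv_right (by norm_num)).clm_apply contDiff_const

lemma hasCompactSupport_sq {X : Type*} [TopologicalSpace X] {φ : X → ℝ}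
    (hφ : HasCompactSupport φ) : HasCompactSupport fun x => φ x ^ 2 :=
  hφ.comp_left (g := fun t : ℝ => t ^ 2) (zero_pow two_ne_zero)

variable [MeasurableSpace E] [BorelSpace E] (μ : Measure E) [μ.IsAddHaarMeasure]

lemma integrable_norm_fderiv_sq (hf : ContDiff ℝ 1 f) (hfc : HasCompactSupport f) :
    Integrable (fun x => ‖fderiv ℝ f x‖ ^ 2) μ :=
  ((hf.continuous_fderiv one_ne_zero).norm.pow 2).integrable_of_hasCompactSupport
    (hasCompactSupport_sq (hfc.fderiv ℝ).norm)

lemma integral_diffQuotient_mul (hf : Continuous f) (hfc : HasCompactSupport f)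
    (hg : Continuous g) (a : E) (t : ℝ) :
    ∫ x, (t⁻¹ • (f (x + t • a) - f x)) * g x ∂μ =
      ∫ x, (t⁻¹ • (g (x + t • -a) - g x)) * f x ∂μ := by
  have translate : ∫ x, f (x + t • a) * g x ∂μ = ∫ x, g (x + t • -a) * f x ∂μ := by
    rw [← integral_add_right_eq_self _ (t • -a)]
    simp [mul_comm]
  have integrable_fg : Integrable (fun x => f x * g x) μ :=
    (hf.mul hg).integrable_of_hasCompactSupport hfc.mul_right
  have integrable_shift_f : Integrable (fun x => f (x + t • a) * g x) μ :=
    ((hf.comp (continuous_add_const _)).mul hg).integrable_of_hasCompactSupport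
      (hfc.comp_homeomorph (Homeomorph.addRight (t • a))).mul_right
  have integrable_shift_g : Integrable (fun x => g (x + t • -a) * f x) μ :=
    ((hg.comp (continuous_add_const _)).mul hf).integrable_of_hasCompactSupport hfc.mul_left
  simp only [smul_eq_mul, mul_assoc, integral_const_mul, sub_mul]
  rw [integral_sub integrable_shift_f integrable_fg, translate,
    integral_sub integrable_shift_g (by simpa only [mul_comm] using integrable_fg)]
  simp only [mul_comm]

variable [FiniteDimensional ℝ E]

lemma integral_mul_fderiv_eq_neg_integral_fderiv_mul (hf : ContDiff ℝ 1 f)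
    (hfc : HasCompactSupport f) (hg : ContDiff ℝ 1 g) (b : E) :
    ∫ x, f x * fderiv ℝ g x b ∂μ = -∫ x, fderiv ℝ f x b * g x ∂μ := by
  apply integral_mul_fderiv_eq_neg_fderiv_mul_of_integrable
  · exact ((continuous_fderiv_apply_const hf b).mul
      hg.continuous).integrable_of_hasCompactSupport (hfc.fderiv_apply ℝ b).mul_right
  · exact (hf.continuous.mul (continuous_fderiv_apply_const hg
      b)).integrable_of_hasCompactSupport hfc.mul_right
  · exact (hf.continuous.mul hg.continuous).integrable_of_hasCompactSupport hfc.mul_right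
  · exact fun x _ => hf.differentiable one_ne_zero x
  · exact fun x _ => hg.differentiable one_ne_zero x

-- A second derivative is avoided by differencing along `a` before integrating by parts along `b`.
lemma integral_fderiv_mul_fderiv_comm_of_hasCompactSupport
    (hf : ContDiff ℝ 1 f) (hfc : HasCompactSupport f)
    (hg : ContDiff ℝ 1 g) (hgc : HasCompactSupport g) (a b : E) :
    ∫ x, fderiv ℝ f x a * fderiv ℝ g x b ∂μ = ∫ x, fderiv ℝ f x b * fderiv ℝ g x a ∂μ := by
  have hf' := continuous_fderiv_apply_const hf b
  have hg' := continuous_fderiv_apply_const hg b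
  have hf_diff := hf.differentiable one_ne_zero
  have hg_diff := hg.differentiable one_ne_zero
  obtain ⟨_, f_lipschitz⟩ := hf.lipschitzWith_of_hasCompactSupport hfc one_ne_zero
  obtain ⟨_, g_lipschitz⟩ := hg.lipschitzWith_of_hasCompactSupport hgc one_ne_zero
  have left_limit := f_lipschitz.integral_inv_smul_sub_mul_tendsto_integral_lineDeriv_mul'
    (μ := μ) hfc hg' a
  have right_limit := (g_lipschitz.integral_inv_smul_sub_mul_tendsto_integral_lineDeriv_mul'
    (μ := μ) hgc hf' (-a)).neg
  have quotients_eq (t : ℝ) : ∫ x, (t⁻¹ • (f (x + t • a) - f x)) * fderiv ℝ g x b ∂μ =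
      -∫ x, (t⁻¹ • (g (x + t • -a) - g x)) * fderiv ℝ f x b ∂μ := by
    have fderiv_quotient (x : E) : fderiv ℝ (fun y => t⁻¹ • (f (y + t • a) - f y)) x b =
        t⁻¹ • (fderiv ℝ f (x + t • a) b - fderiv ℝ f x b) := by
      rw [fderiv_fun_const_smul (by fun_prop), fderiv_fun_sub (by fun_prop) (by fun_prop),
        fderiv_comp_add_right]
      rfl
    rw [integral_mul_fderiv_eq_neg_integral_fderiv_mul μ (by fun_prop) _ hg b]
    · simp only [fderiv_quotient]
      rw [integral_diffQuotient_mul μ hf' (hfc.fderiv_apply ℝ b) hg.continuous]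
    · exact ((hfc.comp_homeomorph (Homeomorph.addRight (t • a))).sub hfc).comp_left (smul_zero t⁻¹)
  simp only [quotients_eq] at left_limit
  simpa only [hf_diff.differentiableAt.lineDeriv_eq_fderiv,
    hg_diff.differentiableAt.lineDeriv_eq_fderiv, map_neg, neg_mul, integral_neg, neg_neg,
    mul_comm (fderiv ℝ g _ a)] using tendsto_nhds_unique left_limit right_limit

lemma integral_fderiv_mul_fderiv_comm (hf : ContDiff ℝ 1 f) (hfc : HasCompactSupport f)
    (hg : ContDiff ℝ 1 g) (a b : E) :
    ∫ x, fderiv ℝ f x a * fderiv ℝ g x b ∂μ = ∫ x, fderiv ℝ f x b * fderiv ℝ g x a ∂μ := by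
  obtain ⟨R, hR, hfR⟩ := hfc.isCompact.isBounded.subset_ball_lt 0 0
  let χ : ContDiffBump (0 : E) := ⟨R, R + 1, hR, lt_add_one R⟩
  have fderiv_cutoff_mul (c d x : E) :
      fderiv ℝ f x c * fderiv ℝ (fun y => χ y * g y) x d = fderiv ℝ f x c * fderiv ℝ g x d := by
    by_cases hx : x ∈ tsupport f
    · have : (fun y => χ y * g y) =ᶠ[𝓝 x] g := by
        filter_upwards [χ.eventuallyEq_one_of_mem_ball (hfR hx)] with y hy
        simp [hy]
      rw [this.fderiv_eq]
    · simp [fderiv_of_notMem_tsupport ℝ hx]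
  simpa only [fderiv_cutoff_mul] using
    integral_fderiv_mul_fderiv_comm_of_hasCompactSupport μ hf hfc (χ.contDiff.mul hg)
      χ.hasCompactSupport.mul_right a b

end IntegrationByParts

section JacobianAlong

variable {E : Type*} [NormedAddCommGroup E] [NormedSpace ℝ E] {a b : E} {f g u v φ : E → ℝ}

/-- The Jacobian `∂ₐf ∂_b g - ∂_b f ∂ₐg` of the pair `(f, g)` along the directions `a` and `b`. -/
noncomputable def jacobianAlong (a b : E) (f g : E → ℝ) (x : E) : ℝ :=
  fderiv ℝ f x a * fderiv ℝ g x b - fderiv ℝ f x b * fderiv ℝ g x a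

lemma continuous_jacobianAlong (hf : ContDiff ℝ 1 f) (hg : ContDiff ℝ 1 g) :
    Continuous (jacobianAlong a b f g) :=
  ((continuous_fderiv_apply_const hf a).mul (continuous_fderiv_apply_const hg b)).sub
    ((continuous_fderiv_apply_const hf b).mul (continuous_fderiv_apply_const hg a))

lemma abs_jacobianAlong_le (x : E) :
    |jacobianAlong a b f g x| ≤ 2 * (‖a‖ * ‖b‖) * (‖fderiv ℝ f x‖ * ‖fderiv ℝ g x‖) := by
  have product_le (c d : E) : |fderiv ℝ f x c * fderiv ℝ g x d| ≤
      ‖fderiv ℝ f x‖ * ‖c‖ * (‖fderiv ℝ g x‖ * ‖d‖) := by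
    rw [abs_mul]
    exact mul_le_mul ((fderiv ℝ f x).le_opNorm c) ((fderiv ℝ g x).le_opNorm d)
      (abs_nonneg _) (by positivity)
  calc |jacobianAlong a b f g x|
      ≤ |fderiv ℝ f x a * fderiv ℝ g x b| + |fderiv ℝ f x b * fderiv ℝ g x a| := abs_sub _ _
    _ ≤ _ := add_le_add (product_le a b) (product_le b a)
    _ = _ := by ring

lemma jacobianAlong_sq_mul {x : E} (hφ : DifferentiableAt ℝ φ x) (hu : DifferentiableAt ℝ u x) :
    jacobianAlong a b (fun y => φ y ^ 2 * u y) v x =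
      φ x ^ 2 * jacobianAlong a b u v x + 2 * φ x * u x * jacobianAlong a b φ v x := by
  simp only [jacobianAlong, fderiv_fun_mul (hφ.fun_pow 2) hu, fderiv_fun_pow 2 hφ, add_apply,
    smul_apply, smul_eq_mul, nsmul_eq_mul]
  ring

lemma neg_two_mul_jacobianAlong_le {K M : ℝ} (hK : 0 < K) {x : E} (hM : |u x| ≤ M)
    (hdist : ‖fderiv ℝ v x‖ ^ 2 ≤ K * jacobianAlong a b u v x) :
    -(2 * φ x * u x * jacobianAlong a b φ v x) ≤ 2⁻¹ * (φ x ^ 2 * jacobianAlong a b u v x) +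
      8 * K * (‖a‖ * ‖b‖ * M) ^ 2 * ‖fderiv ℝ φ x‖ ^ 2 := by
  have young (s t : ℝ) : 2 * s * t ≤ (2 * K)⁻¹ * s ^ 2 + 2 * K * t ^ 2 := by
    have : 0 ≤ (2 * K)⁻¹ * (s - 2 * K * t) ^ 2 := by positivity
    linear_combination this + (2 * K * t ^ 2 - 2 * s * t) * mul_inv_cancel₀ hK.ne'
  calc -(2 * φ x * u x * jacobianAlong a b φ v x)
      ≤ |2 * φ x * u x * jacobianAlong a b φ v x| := neg_le_abs _
    _ = 2 * |φ x| * |u x| * |jacobianAlong a b φ v x| := by simp only [abs_mul, abs_two]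
    _ ≤ 2 * |φ x| * M * (2 * (‖a‖ * ‖b‖) * (‖fderiv ℝ φ x‖ * ‖fderiv ℝ v x‖)) := by
      have := (abs_nonneg _).trans hM
      gcongr
      exact abs_jacobianAlong_le x
    _ = 2 * (|φ x| * ‖fderiv ℝ v x‖) * (2 * (‖a‖ * ‖b‖ * M) * ‖fderiv ℝ φ x‖) := by ring
    _ ≤ (2 * K)⁻¹ * (|φ x| * ‖fderiv ℝ v x‖) ^ 2 +
          2 * K * (2 * (‖a‖ * ‖b‖ * M) * ‖fderiv ℝ φ x‖) ^ 2 := young _ _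
    _ = (2 * K)⁻¹ * (φ x ^ 2 * ‖fderiv ℝ v x‖ ^ 2) +
          8 * K * (‖a‖ * ‖b‖ * M) ^ 2 * ‖fderiv ℝ φ x‖ ^ 2 := by
      rw [mul_pow, sq_abs]
      ring
    _ ≤ (2 * K)⁻¹ * (φ x ^ 2 * (K * jacobianAlong a b u v x)) +
          8 * K * (‖a‖ * ‖b‖ * M) ^ 2 * ‖fderiv ℝ φ x‖ ^ 2 := by gcongr
    _ = _ := by field_simp

variable [MeasurableSpace E] [BorelSpace E] (μ : Measure E) [μ.IsAddHaarMeasure]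

lemma integrable_mul_jacobianAlong {ψ : E → ℝ} (hψ : Continuous ψ) (hψc : HasCompactSupport ψ)
    (hf : ContDiff ℝ 1 f) (hg : ContDiff ℝ 1 g) :
    Integrable (fun x => ψ x * jacobianAlong a b f g x) μ :=
  (hψ.mul (continuous_jacobianAlong hf hg)).integrable_of_hasCompactSupport hψc.mul_right

lemma integrable_sq_mul_jacobianAlong (hu : ContDiff ℝ 1 u) (hv : ContDiff ℝ 1 v)
    (hφ : ContDiff ℝ 1 φ) (hφc : HasCompactSupport φ) :
    Integrable (fun x => φ x ^ 2 * jacobianAlong a b u v x) μ :=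
  integrable_mul_jacobianAlong μ (hφ.continuous.pow 2)
    (hasCompactSupport_sq hφc) hu hv

lemma integrable_two_mul_jacobianAlong (hu : ContDiff ℝ 1 u) (hv : ContDiff ℝ 1 v)
    (hφ : ContDiff ℝ 1 φ) (hφc : HasCompactSupport φ) :
    Integrable (fun x => 2 * φ x * u x * jacobianAlong a b φ v x) μ :=
  integrable_mul_jacobianAlong μ ((continuous_const.mul hφ.continuous).mul hu.continuous)
    (hφc.mul_left (f := fun _ => (2 : ℝ))).mul_right hφ hv

variable [FiniteDimensional ℝ E]

theorem integral_jacobianAlong_eq_zero (hf : ContDiff ℝ 1 f) (hfc : HasCompactSupport f)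
    (hg : ContDiff ℝ 1 g) : ∫ x, jacobianAlong a b f g x ∂μ = 0 := by
  have integrable_mul (c d : E) : Integrable (fun x => fderiv ℝ f x c * fderiv ℝ g x d) μ :=
    ((continuous_fderiv_apply_const hf c).mul
      (continuous_fderiv_apply_const hg d)).integrable_of_hasCompactSupport
      (hfc.fderiv_apply ℝ c).mul_right
  simp only [jacobianAlong]
  rw [integral_sub (integrable_mul a b) (integrable_mul b a),
    integral_fderiv_mul_fderiv_comm μ hf hfc hg, sub_self]

lemma integral_sq_mul_jacobianAlong_eq (hu : ContDiff ℝ 1 u) (hv : ContDiff ℝ 1 v)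
    (hφ : ContDiff ℝ 1 φ) (hφc : HasCompactSupport φ) :
    ∫ x, φ x ^ 2 * jacobianAlong a b u v x ∂μ =
      ∫ x, -(2 * φ x * u x * jacobianAlong a b φ v x) ∂μ := by
  have hφu : HasCompactSupport fun x => φ x ^ 2 * u x :=
    (hasCompactSupport_sq hφc).mul_right
  have total := integral_jacobianAlong_eq_zero μ (a := a) (b := b) ((hφ.pow 2).mul hu) hφu hv
  simp only [jacobianAlong_sq_mul (hφ.differentiable one_ne_zero _)
    (hu.differentiable one_ne_zero _)] at total
  rw [integral_add (integrable_sq_mul_jacobianAlong μ hu hv hφ hφc)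
    (integrable_two_mul_jacobianAlong μ hu hv hφ hφc)] at total
  rw [integral_neg]
  exact eq_neg_of_add_eq_zero_left total

theorem integral_sq_mul_jacobianAlong_le {K M : ℝ} (hu : ContDiff ℝ 1 u) (hv : ContDiff ℝ 1 v)
    (hφ : ContDiff ℝ 1 φ) (hφc : HasCompactSupport φ) (hK : 0 < K) (hM : ∀ x, |u x| ≤ M)
    (hdist : ∀ x, ‖fderiv ℝ v x‖ ^ 2 ≤ K * jacobianAlong a b u v x) :
    ∫ x, φ x ^ 2 * jacobianAlong a b u v x ∂μ ≤
      16 * K * (‖a‖ * ‖b‖ * M) ^ 2 * ∫ x, ‖fderiv ℝ φ x‖ ^ 2 ∂μ := by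
  have half_integrable :=
    (integrable_sq_mul_jacobianAlong (a := a) (b := b) μ hu hv hφ hφc).const_mul 2⁻¹
  have energy_integrable :=
    (integrable_norm_fderiv_sq μ hφ hφc).const_mul (8 * K * (‖a‖ * ‖b‖ * M) ^ 2)
  have absorb : ∫ x, φ x ^ 2 * jacobianAlong a b u v x ∂μ ≤
      2⁻¹ * ∫ x, φ x ^ 2 * jacobianAlong a b u v x ∂μ +
        8 * K * (‖a‖ * ‖b‖ * M) ^ 2 * ∫ x, ‖fderiv ℝ φ x‖ ^ 2 ∂μ := by
    rw [← integral_const_mul, ← integral_const_mul,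
      ← integral_add half_integrable energy_integrable]
    conv_lhs => rw [integral_sq_mul_jacobianAlong_eq μ hu hv hφ hφc]
    exact integral_mono (integrable_two_mul_jacobianAlong μ hu hv hφ hφc).neg
      (half_integrable.add energy_integrable)
      fun x => neg_two_mul_jacobianAlong_le hK (hM x) (hdist x)
  linarith

end JacobianAlong

section DirichletEnergy

variable {E : Type*} [NormedAddCommGroup E] [NormedSpace ℝ E] [FiniteDimensional ℝ E]

/-- A smooth cutoff equal to `1` on the ball of radius `r` and supported in the ball of radius
`2 * r`. All of these are rescalings of one another. -/
noncomputable def doublingBump (E : Type*) [NormedAddCommGroup E] {r : ℝ} (hr : 0 < r) :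
    ContDiffBump (0 : E) :=
  ⟨r, 2 * r, hr, by linarith⟩

lemma doublingBump_apply {r : ℝ} (hr : 0 < r) (x : E) :
    doublingBump E hr x = doublingBump E one_pos (r⁻¹ • x) := by
  simp [ContDiffBump.apply, doublingBump, hr.ne']

lemma norm_mem_Icc_of_fderiv_doublingBump_ne_zero {r : ℝ} (hr : 0 < r) {x : E}
    (hx : fderiv ℝ (doublingBump E hr) x ≠ 0) : ‖x‖ ∈ Set.Icc r (2 * r) := by
  constructor
  · by_contra! hlt
    have : doublingBump E hr =ᶠ[𝓝 x] fun _ => (1 : ℝ) :=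
      (doublingBump E hr).eventuallyEq_one_of_mem_ball (mem_ball_zero_iff.2 hlt)
    exact hx (by simp [this.fderiv_eq])
  · have := support_fderiv_subset ℝ hx
    rwa [ContDiffBump.tsupport_eq, mem_closedBall_zero_iff] at this

/-- The cutoff at the scale `4 ^ k * R`; the factor `4` makes the transition annuli disjoint. -/
noncomputable abbrev bumpAtScale (E : Type*) [NormedAddCommGroup E] {R : ℝ} (hR : 0 < R) (k : ℕ) :
    ContDiffBump (0 : E) :=
  doublingBump E (mul_pos (pow_pos four_pos k) hR)

lemma norm_sum_sq_eq_sum_norm_sq {ι F : Type*} [SeminormedAddCommGroup F] {s : Finset ι}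
    {f : ι → F} (hf : Set.Subsingleton {i | f i ≠ 0}) :
    ‖∑ i ∈ s, f i‖ ^ 2 = ∑ i ∈ s, ‖f i‖ ^ 2 := by
  by_cases h : ∃ i ∈ s, f i ≠ 0
  · obtain ⟨i, hi, hfi⟩ := h
    have eq_zero : ∀ j ∈ s, j ≠ i → f j = 0 := fun j _ hji => by_contra fun hfj => hji (hf hfj hfi)
    rw [Finset.sum_eq_single_of_mem i hi eq_zero,
      Finset.sum_eq_single_of_mem i hi fun j hj hji => by simp [eq_zero j hj hji]]
  · push Not at h
    rw [Finset.sum_eq_zero h, Finset.sum_eq_zero fun i hi => by simp [h i hi]]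
    simp

lemma subsingleton_fderiv_bumpAtScale_ne_zero {R : ℝ} (hR : 0 < R) (x : E) :
    {k : ℕ | fderiv ℝ (bumpAtScale E hR k) x ≠ 0}.Subsingleton := by
  have scale_not_lt {i j : ℕ} (hi : ‖x‖ ≤ 2 * (4 ^ i * R)) (hj : 4 ^ j * R ≤ ‖x‖) : ¬i < j := by
    intro hij
    have : (4 : ℝ) ^ (i + 1) ≤ 4 ^ j := pow_le_pow_right₀ (by norm_num) hij
    have : 4 * (4 ^ i * R) ≤ 4 ^ j * R := by
      rw [← mul_assoc, ← pow_succ']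
      gcongr
    have : 0 < 4 ^ i * R := by positivity
    linarith
  intro i hi j hj
  have ⟨i_le, le_i⟩ := norm_mem_Icc_of_fderiv_doublingBump_ne_zero _ hi
  have ⟨j_le, le_j⟩ := norm_mem_Icc_of_fderiv_doublingBump_ne_zero _ hj
  exact (not_lt.1 (scale_not_lt le_j i_le)).antisymm (not_lt.1 (scale_not_lt le_i j_le))

/-- The average of the cutoffs at the scales `R, 4 * R, …, 4 ^ (N - 1) * R`, a smooth substitute for
the logarithmic cutoff. -/
noncomputable def multiscaleCutoff (E : Type*) [NormedAddCommGroup E] [NormedSpace ℝ E]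
    [FiniteDimensional ℝ E] {R : ℝ} (hR : 0 < R) (N : ℕ) (x : E) : ℝ :=
  (N : ℝ)⁻¹ * ∑ k ∈ Finset.range N, bumpAtScale E hR k x

lemma contDiff_multiscaleCutoff {R : ℝ} (hR : 0 < R) (N : ℕ) :
    ContDiff ℝ ∞ (multiscaleCutoff E hR N) :=
  contDiff_const.mul (ContDiff.sum fun _ _ => ContDiffBump.contDiff _)

lemma hasCompactSupport_multiscaleCutoff {R : ℝ} (hR : 0 < R) (N : ℕ) :
    HasCompactSupport (multiscaleCutoff E hR N) := by
  refine HasCompactSupport.intro (isCompact_closedBall 0 (2 * (4 ^ N * R))) fun x hx => ?_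
  rw [mem_closedBall, not_le] at hx
  refine mul_eq_zero_of_right _ (Finset.sum_eq_zero fun k hk => ?_)
  refine ContDiffBump.zero_of_le_dist _ (le_trans ?_ hx.le)
  have : (4 : ℝ) ^ k ≤ 4 ^ N := pow_le_pow_right₀ (by norm_num) (Finset.mem_range.1 hk).le
  change 2 * (4 ^ k * R) ≤ 2 * (4 ^ N * R)
  gcongr

lemma multiscaleCutoff_eq_one {R : ℝ} (hR : 0 < R) {N : ℕ} (hN : N ≠ 0) {x : E}
    (hx : x ∈ ball 0 R) : multiscaleCutoff E hR N x = 1 := by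
  have bump_eq_one (k : ℕ) : bumpAtScale E hR k x = 1 := by
    refine ContDiffBump.one_of_mem_closedBall _ (closedBall_subset_closedBall ?_
      (ball_subset_closedBall hx))
    exact le_mul_of_one_le_left hR.le (one_le_pow₀ (by norm_num))
  simp [multiscaleCutoff, bump_eq_one, hN]

lemma norm_fderiv_multiscaleCutoff_sq {R : ℝ} (hR : 0 < R) (N : ℕ) (x : E) :
    ‖fderiv ℝ (multiscaleCutoff E hR N) x‖ ^ 2 = ((N : ℝ)⁻¹) ^ 2 * ∑ k ∈ Finset.range N,
      ‖fderiv ℝ (bumpAtScale E hR k) x‖ ^ 2 := by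
  have bump_differentiable (k : ℕ) :
      DifferentiableAt ℝ (bumpAtScale E hR k) x :=
    (ContDiffBump.contDiff (n := 1) _).differentiable one_ne_zero x
  unfold multiscaleCutoff
  rw [fderiv_const_mul (DifferentiableAt.fun_sum fun k _ => bump_differentiable k),
    fderiv_fun_sum fun k _ => bump_differentiable k, norm_smul, mul_pow,
    norm_sum_sq_eq_sum_norm_sq (subsingleton_fderiv_bumpAtScale_ne_zero hR x), norm_inv,
    RCLike.norm_natCast]

variable [MeasurableSpace E] [BorelSpace E] (μ : Measure E) [μ.IsAddHaarMeasure]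

lemma integral_norm_fderiv_doublingBump_sq (hE : finrank ℝ E = 2) {r : ℝ} (hr : 0 < r) :
    ∫ x, ‖fderiv ℝ (doublingBump E hr) x‖ ^ 2 ∂μ =
      ∫ x, ‖fderiv ℝ (doublingBump E one_pos) x‖ ^ 2 ∂μ := by
  have fderiv_eq (x : E) : fderiv ℝ (doublingBump E hr) x =
      r⁻¹ • fderiv ℝ (doublingBump E one_pos) (r⁻¹ • x) := by
    rw [← fderiv_comp_smul, funext (doublingBump_apply hr)]
  simp only [fderiv_eq, norm_smul, mul_pow, integral_const_mul]
  rw [Measure.integral_comp_inv_smul_of_nonneg μ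
    (fun x => ‖fderiv ℝ (doublingBump E one_pos) x‖ ^ 2) hr.le, hE, norm_inv, norm_of_nonneg hr.le,
    smul_eq_mul, ← mul_assoc, ← mul_pow, inv_mul_cancel₀ hr.ne', one_pow, one_mul]

lemma integral_norm_fderiv_multiscaleCutoff_sq (hE : finrank ℝ E = 2) {R : ℝ} (hR : 0 < R)
    (N : ℕ) :
    ∫ x, ‖fderiv ℝ (multiscaleCutoff E hR N) x‖ ^ 2 ∂μ =
      (N : ℝ)⁻¹ * ∫ x, ‖fderiv ℝ (doublingBump E one_pos) x‖ ^ 2 ∂μ := by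
  simp only [norm_fderiv_multiscaleCutoff_sq]
  rw [integral_const_mul, integral_finsetSum _ fun k _ => integrable_norm_fderiv_sq μ
    (ContDiffBump.contDiff _) (ContDiffBump.hasCompactSupport _)]
  simp only [integral_norm_fderiv_doublingBump_sq μ hE, Finset.sum_const, Finset.card_range,
    nsmul_eq_mul]
  rcases eq_or_ne N 0 with rfl | hN
  · simp
  · field_simp

theorem exists_cutoff_integral_norm_fderiv_sq_lt (hE : finrank ℝ E = 2) {R ε : ℝ} (hR : 0 < R)
    (hε : 0 < ε) :
    ∃ φ : E → ℝ, ContDiff ℝ ∞ φ ∧ HasCompactSupport φ ∧ (∀ x ∈ ball 0 R, φ x = 1) ∧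
      ∫ x, ‖fderiv ℝ φ x‖ ^ 2 ∂μ < ε := by
  have energy_tendsto : Tendsto (fun N : ℕ => ∫ x, ‖fderiv ℝ (multiscaleCutoff E hR N) x‖ ^ 2 ∂μ)
      atTop (𝓝 0) := by
    simp only [integral_norm_fderiv_multiscaleCutoff_sq μ hE]
    simpa only [zero_mul] using (tendsto_inv_atTop_nhds_zero_nat (𝕜 := ℝ)).mul_const _
  obtain ⟨N, N_energy, N_pos⟩ :=
    ((energy_tendsto.eventually (gt_mem_nhds hε)).and (eventually_gt_atTop 0)).exists
  exact ⟨multiscaleCutoff E hR N, contDiff_multiscaleCutoff hR N,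
    hasCompactSupport_multiscaleCutoff hR N, fun x => multiscaleCutoff_eq_one hR N_pos.ne',
    N_energy⟩

lemma setIntegral_ball_nonpos_of_integral_sq_mul_le_energy (hE : finrank ℝ E = 2) {F : E → ℝ}
    (hF : Continuous F) (hF_nonneg : 0 ≤ F) {C : ℝ}
    (hF_le : ∀ φ : E → ℝ, ContDiff ℝ ∞ φ → HasCompactSupport φ →
      ∫ x, φ x ^ 2 * F x ∂μ ≤ C * ∫ x, ‖fderiv ℝ φ x‖ ^ 2 ∂μ) {R : ℝ} (hR : 0 < R) :
    ∫ x in ball 0 R, F x ∂μ ≤ 0 := by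
  refine le_of_forall_pos_le_add fun ε hε => ?_
  obtain ⟨φ, hφ, hφc, φ_eq_one, energy_lt⟩ :=
    exists_cutoff_integral_norm_fderiv_sq_lt μ hE hR (div_pos hε (by positivity : 0 < |C| + 1))
  have φF_integrable : Integrable (fun x => φ x ^ 2 * F x) μ :=
    ((hφ.continuous.pow 2).mul hF).integrable_of_hasCompactSupport
      (hasCompactSupport_sq hφc).mul_right
  calc ∫ x in ball 0 R, F x ∂μ
      = ∫ x in ball 0 R, φ x ^ 2 * F x ∂μ :=
        setIntegral_congr_fun measurableSet_ball fun x hx => by simp [φ_eq_one x hx]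
    _ ≤ ∫ x, φ x ^ 2 * F x ∂μ :=
        setIntegral_le_integral φF_integrable
          (ae_of_all _ fun x => mul_nonneg (sq_nonneg _) (hF_nonneg x))
    _ ≤ C * ∫ x, ‖fderiv ℝ φ x‖ ^ 2 ∂μ := hF_le φ hφ hφc
    _ ≤ (|C| + 1) * (ε / (|C| + 1)) := by
        gcongr
        exact (le_abs_self C).trans (le_add_of_nonneg_right zero_le_one)
    _ = 0 + ε := by field_simp; simp

theorem eq_zero_of_integral_sq_mul_le_energy (hE : finrank ℝ E = 2) {F : E → ℝ}
    (hF : Continuous F) (hF_nonneg : 0 ≤ F) {C : ℝ}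
    (hF_le : ∀ φ : E → ℝ, ContDiff ℝ ∞ φ → HasCompactSupport φ →
      ∫ x, φ x ^ 2 * F x ∂μ ≤ C * ∫ x, ‖fderiv ℝ φ x‖ ^ 2 ∂μ) :
    F = 0 := by
  funext x
  obtain ⟨R, hR, hxR⟩ : ∃ R > 0, x ∈ ball 0 R :=
    ⟨‖x‖ + 1, by positivity, mem_ball_zero_iff.2 (lt_add_one _)⟩
  have integral_eq_zero : ∫ x in ball 0 R, F x ∂μ = 0 :=
    (setIntegral_ball_nonpos_of_integral_sq_mul_le_energy μ hE hF hF_nonneg hF_le hR).antisymm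
      (integral_nonneg hF_nonneg)
  have F_integrable : IntegrableOn F (ball 0 R) μ :=
    (hF.continuousOn.integrableOn_compact (isCompact_closedBall 0 R)).mono_set
      ball_subset_closedBall
  have F_ae_zero : F =ᵐ[μ.restrict (ball 0 R)] 0 :=
    (integral_eq_zero_iff_of_nonneg hF_nonneg F_integrable).1 integral_eq_zero
  exact Measure.eqOn_open_of_ae_eq F_ae_zero isOpen_ball hF.continuousOn continuousOn_const hxR

end DirichletEnergy

theorem jacobianAlong_eq_zero_of_bounded {E : Type*} [NormedAddCommGroup E] [NormedSpace ℝ E]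
    (hE : finrank ℝ E = 2) {a b : E} {u v : E → ℝ} {K M : ℝ} (hu : ContDiff ℝ 1 u)
    (hv : ContDiff ℝ 1 v) (hM : ∀ x, |u x| ≤ M) (hK : 0 < K)
    (hdist : ∀ x, ‖fderiv ℝ v x‖ ^ 2 ≤ K * jacobianAlong a b u v x) :
    jacobianAlong a b u v = 0 := by
  have : FiniteDimensional ℝ E := FiniteDimensional.of_finrank_eq_succ hE
  borelize E
  exact eq_zero_of_integral_sq_mul_le_energy Measure.addHaar hE (continuous_jacobianAlong hu hv)
    (fun x => nonneg_of_mul_nonneg_right ((sq_nonneg _).trans (hdist x)) hK) fun φ hφ hφc =>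
      integral_sq_mul_jacobianAlong_le _ hu hv (contDiff_infty.1 hφ 1) hφc hK hM hdist

section Hessian

variable {n : ℕ} {w : EuclideanSpace ℝ (Fin n) → ℝ}

lemma isSymm_hessianMatrix (hw : ContDiff ℝ 2 w) (x : EuclideanSpace ℝ (Fin n)) :
    (hessianMatrix w x).IsSymm := by
  have hw' : DifferentiableAt ℝ (fderiv ℝ w) x :=
    (hw.fderiv_right (m := 1) (by norm_num)).differentiable one_ne_zero x
  ext i j
  simp only [Matrix.transpose_apply, hessianMatrix, Matrix.of_apply,
    fderiv_clm_apply hw' (differentiableAt_const _)]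
  simpa using (hw.contDiffAt.isSymmSndFDerivAt (by simp)).eq _ _

lemma norm_fderiv_partial_sq (x : EuclideanSpace ℝ (Fin n)) (j : Fin n) :
    ‖fderiv ℝ (fun y => fderiv ℝ w y (EuclideanSpace.single j 1)) x‖ ^ 2 =
      ∑ i, hessianMatrix w x i j ^ 2 := by
  simp [(EuclideanSpace.basisFun (Fin n) ℝ).norm_dual, hessianMatrix]

lemma abs_fderiv_single_le_norm_gradient (x : EuclideanSpace ℝ (Fin n)) (i : Fin n) :
    |fderiv ℝ w x (EuclideanSpace.single i 1)| ≤ ‖gradient w x‖ := by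
  simpa [gradient] using (fderiv ℝ w x).le_opNorm (EuclideanSpace.single i 1)

lemma exists_eq_sum_mul_add_of_hessianMatrix_eq_zero (hw : ContDiff ℝ 2 w)
    (hH : ∀ x, hessianMatrix w x = 0) :
    ∃ (b : Fin n → ℝ) (c : ℝ), ∀ x, w x = (∑ i, b i * x i) + c := by
  let b : Fin n → ℝ := fun i => fderiv ℝ w 0 (EuclideanSpace.single i 1)
  let L : EuclideanSpace ℝ (Fin n) →L[ℝ] ℝ := ∑ i, b i • EuclideanSpace.proj i
  have partial_eq (i : Fin n) (x : EuclideanSpace ℝ (Fin n)) :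
      fderiv ℝ w x (EuclideanSpace.single i 1) = b i := by
    refine is_const_of_fderiv_eq_zero (𝕜 := ℝ)
      ((contDiff_fderiv_apply_const hw _).differentiable one_ne_zero) (fun y => ?_) x 0
    rw [← norm_eq_zero, ← sq_eq_zero_iff, norm_fderiv_partial_sq, hH]
    simp
  have fderiv_eq (x : EuclideanSpace ℝ (Fin n)) : fderiv ℝ w x = L := by
    refine ContinuousLinearMap.coe_injective
      ((EuclideanSpace.basisFun (Fin n) ℝ).toBasis.ext fun i => ?_)
    simp [L, partial_eq]
  have w_eq : w = fun x => L x + w 0 := by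
    refine eq_of_fderiv_eq (𝕜 := ℝ) (hw.differentiable two_ne_zero) (by fun_prop) (fun x => ?_) 0
      (by simp)
    rw [fderiv_eq, fderiv_add_const, L.fderiv]
  exact ⟨b, w 0, fun x => by rw [w_eq]; simp [L]⟩

end Hessian

section Elliptic

variable {lam Lam : ℝ}

/-- Ellipticity of the quadratic form of `A`: it lies between `lam * |ξ|²` and
`Lam * |ξ|²`. -/
def HasEllipticBounds {ι : Type*} [Fintype ι] (lam Lam : ℝ) (A : Matrix ι ι ℝ) : Prop :=
  ∀ ξ : ι → ℝ, lam * (∑ i, ξ i ^ 2) ≤ ∑ i, ∑ j, A i j * ξ i * ξ j ∧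
    ∑ i, ∑ j, A i j * ξ i * ξ j ≤ Lam * (∑ i, ξ i ^ 2)

lemma HasEllipticBounds.diag_mem_Icc {ι : Type*} [Fintype ι] {A : Matrix ι ι ℝ}
    (hA : HasEllipticBounds lam Lam A) (k : ι) : A k k ∈ Set.Icc lam Lam := by
  classical simpa [Pi.single_apply] using hA (Pi.single k 1)

lemma HasEllipticBounds.mul_sum_row_sq_le_mul_neg_det {A H : Matrix (Fin 2) (Fin 2) ℝ}
    (hA : HasEllipticBounds lam Lam A) (hlam : 0 < lam) (hH : H.IsSymm)
    (hAH : ∑ i, ∑ j, A i j * H i j = 0) (i : Fin 2) :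
    lam * ∑ j, H i j ^ 2 ≤ Lam * -H.det := by
  -- Testing the form on the `i`-th row of `H` and eliminating with `hAH` leaves one diagonal entry.
  have form_row : ∑ j, ∑ k, A j k * H i j * H i k = A i.rev i.rev * -H.det := by
    have hsymm : H 1 0 = H 0 1 := hH.apply 0 1
    simp only [Fin.sum_univ_two, Matrix.det_fin_two, hsymm] at hAH ⊢
    rcases Fin.exists_fin_two.1 ⟨i, rfl⟩ with rfl | rfl
    · simp only [Fin.rev_zero, Fin.reduceLast]
      linear_combination H 0 0 * hAH
    · simp only [Fin.reduceRev, hsymm]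
      linear_combination H 1 1 * hAH
  have row_le : lam * ∑ j, H i j ^ 2 ≤ A i.rev i.rev * -H.det := form_row ▸ (hA (H i)).1
  have diag_mem := hA.diag_mem_Icc i.rev
  have neg_det_nonneg : 0 ≤ -H.det := by
    refine nonneg_of_mul_nonneg_right (le_trans ?_ row_le) (hlam.trans_le diag_mem.1)
    positivity
  exact row_le.trans (mul_le_mul_of_nonneg_right diag_mem.2 neg_det_nonneg)

end Elliptic

section Plane

variable {w : EuclideanSpace ℝ (Fin 2) → ℝ}

lemma jacobianAlong_partials_eq_neg_det_hessianMatrix (i : Fin 2) :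
    jacobianAlong (EuclideanSpace.single i.rev 1) (EuclideanSpace.single i 1)
      (fun y => fderiv ℝ w y (EuclideanSpace.single i 1))
      (fun y => fderiv ℝ w y (EuclideanSpace.single i.rev 1)) =
    fun x => -(hessianMatrix w x).det := by
  funext x
  simp only [jacobianAlong, Matrix.det_fin_two, hessianMatrix, Matrix.of_apply]
  rcases Fin.exists_fin_two.1 ⟨i, rfl⟩ with rfl | rfl
  · simp only [Fin.rev_zero, Fin.reduceLast]
    ring
  · simp only [Fin.reduceRev]
    ring

theorem det_hessianMatrix_eq_zero_of_bounded_partial {K M : ℝ} (hw : ContDiff ℝ 2 w) (i : Fin 2)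
    (hM : ∀ x, |fderiv ℝ w x (EuclideanSpace.single i 1)| ≤ M) (hK : 0 < K)
    (hdist : ∀ x j, ∑ k, hessianMatrix w x j k ^ 2 ≤ K * -(hessianMatrix w x).det)
    (x : EuclideanSpace ℝ (Fin 2)) : (hessianMatrix w x).det = 0 := by
  have jacobian_zero := jacobianAlong_eq_zero_of_bounded (finrank_euclideanSpace_fin (𝕜 := ℝ))
    (contDiff_fderiv_apply_const hw _) (contDiff_fderiv_apply_const hw _) hM hK fun y => by
      rw [norm_fderiv_partial_sq, jacobianAlong_partials_eq_neg_det_hessianMatrix i]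
      simpa only [(isSymm_hessianMatrix hw y).apply] using hdist y i.rev
  rw [jacobianAlong_partials_eq_neg_det_hessianMatrix] at jacobian_zero
  exact neg_eq_zero.1 (congrFun jacobian_zero x)

theorem liouville_nondivergence_plane_general {lam Lam : ℝ} (hlam : 0 < lam)
    {a : EuclideanSpace ℝ (Fin 2) → Matrix (Fin 2) (Fin 2) ℝ}
    (haelliptic : ∀ x, HasEllipticBounds lam Lam (a x)) (hw : ContDiff ℝ 2 w) (i : Fin 2)
    (hpartial : ∃ C : ℝ, ∀ x, |fderiv ℝ w x (EuclideanSpace.single i 1)| ≤ C)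
    (hEqn : ∀ x, ∑ i, ∑ j, a x i j * hessianMatrix w x i j = 0) :
    ∃ (b : Fin 2 → ℝ) (c : ℝ), ∀ x, w x = (∑ i, b i * x i) + c := by
  obtain ⟨C, hC⟩ := hpartial
  have row_le (x : EuclideanSpace ℝ (Fin 2)) (j : Fin 2) :
      ∑ k, hessianMatrix w x j k ^ 2 ≤ Lam / lam * -(hessianMatrix w x).det := by
    rw [div_mul_eq_mul_div, le_div_iff₀' hlam]
    exact (haelliptic x).mul_sum_row_sq_le_mul_neg_det hlam (isSymm_hessianMatrix hw x) (hEqn x) j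
  have diag_mem := (haelliptic 0).diag_mem_Icc 0
  have Lam_pos : 0 < Lam := hlam.trans_le (diag_mem.1.trans diag_mem.2)
  have det_zero := det_hessianMatrix_eq_zero_of_bounded_partial hw i hC (div_pos Lam_pos hlam)
    row_le
  refine exists_eq_sum_mul_add_of_hessianMatrix_eq_zero hw fun x => Matrix.ext fun j k => ?_
  have row_sq_nonpos : ∑ k, hessianMatrix w x j k ^ 2 ≤ 0 := by
    simpa only [det_zero, neg_zero, mul_zero] using row_le x j
  have entry_sq_nonpos : hessianMatrix w x j k ^ 2 ≤ 0 :=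
    (Finset.single_le_sum (fun k _ => sq_nonneg (hessianMatrix w x j k))
      (Finset.mem_univ k)).trans row_sq_nonpos
  exact (sq_nonpos_iff _).1 entry_sq_nonpos

end Plane

/-- Liouville theorem for non-divergence form uniformly elliptic equations in the
plane: entire smooth solutions with bounded gradient are affine. No regularity of
the coefficients `a` is assumed. -/
theorem liouville_nondivergence_plane (lam : ℝ) (hlam : lam ∈ Set.Ioc (0 : ℝ) 1)
    (a : EuclideanSpace ℝ (Fin 2) → Matrix (Fin 2) (Fin 2) ℝ)
    (hasym : ∀ x, (a x).IsSymm)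
    (haelliptic : ∀ x (ξ : Fin 2 → ℝ),
      lam * (∑ i, ξ i ^ 2) ≤ ∑ i, ∑ j, a x i j * ξ i * ξ j ∧
      ∑ i, ∑ j, a x i j * ξ i * ξ j ≤ lam⁻¹ * (∑ i, ξ i ^ 2))
    (w : EuclideanSpace ℝ (Fin 2) → ℝ)
    (hw : ContDiff ℝ (⊤ : ℕ∞) w)
    (hgrad : ∃ C : ℝ, ∀ x, ‖gradient w x‖ ≤ C)
    (hEqn : ∀ x, ∑ i, ∑ j, a x i j * hessianMatrix w x i j = 0) :
    ∃ (b : Fin 2 → ℝ) (c : ℝ), ∀ x, w x = (∑ i, b i * x i) + c := by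
  obtain ⟨C, hC⟩ := hgrad
  exact liouville_nondivergence_plane_general hlam.1 haelliptic (contDiff_infty.1 hw 2) 0
    ⟨C, fun x => (abs_fderiv_single_le_norm_gradient x 0).trans (hC x)⟩ hEqn
end
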